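/- Let K be a field, D a K-linear idempotent complete triangulated category with a split-generator, 𝔟 a bounded co-t-structure on D with finite co-heart C, Φ : D → D an exact endofunctor with Φ^N ≇ 0 for all N > 0, and Γ : D → D^b(K) an exact functor to the bounded derived category of K-vector spaces. Then (i) for every object E ∈ D and every t ∈ ℝ, ȟ_t^𝔟(Φ) ≥ limsup_{N→∞} (1/N) log ∑_{k ∈ ℤ} dim H^{-k}(Γ(Φ^N(E))) e^{kt}; and (ii) if moreover Γ(E) ≅ K (concentrated in degree 0) for every indecomposable object E ∈ C, and for any indecomposable E, F ∈ C every morphism f ∈ Hom(E,F) with Γ(f) ≠ 0 is an isomorphism, then for any split-generator G of D the limit exists and ȟ_t^𝔟(Φ) = lim_{N→∞} (1/N) log ∑_{k ∈ ℤ} dim H^{-k}(Γ(Φ^N(G))) e^{kt}. The analogous statements hold for an exact functor Γ : D^op → D^b(K) with e^{kt} replaced by e^{-kt}. -/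

import Mathlib

/-! The images of `Γ` under the homology functors form a graded homological functor `(h^k)` on `D`
(`cohTheory`, and `cohTheoryOp` for contravariant `Γ'`, with values in the opposite category), and
the exponential sum of dimensions is its weight `w(X) = ∑_k len(h^{-k} X) e^{kt}`. The weight is
subadditive on exact triangles and scales by `e^{nt}` under `Σ^n`, so a co-t-filtration of `X` of
cost `c` gives `w(Φ^N X) ≤ c · b_N`, where `b_N` is the total weight of the images under `Φ^N` of
the finitely many indecomposables of the co-heart (`weight_le_coComplexity_mul`). Applied
to `Φ^N X` in place of `X` and to the identity in place of `Φ^N`, this bounds `w(Φ^N X)` by a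
constant multiple of `δ̌(Φ^N X)`, which is (i).

For (ii), the key point is that every `X` has a co-t-filtration of cost at most `w(X)`
(`exists_coFiltration_le_weight`). If `X ∈ Σ^a D_{≥0}`, choose a decomposition triangle
`D' → X → Σ^a F → ΣD'` with `F` in the co-heart and `D' ∈ Σ^{a-1} D_{≥0}`, such that `F` has as few
indecomposable summands as possible (`exists_minimal_triangle`). If the connecting map were nonzero
in cohomology, its restriction to some indecomposable summand, followed by a projection of `ΣD'`
onto its top co-heart part, would have an invertible component by the hypothesis on `Γ`; that
summand could then be cancelled (`exists_retraction`, `exists_cancel`), contradicting minimality.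
Hence the connecting map vanishes in cohomology, the weight is additive on the triangle, and one
concludes by induction along the bounded co-t-structure.

Consequently `δ̌(X) ≤ w(X)` and `w(Φ^N X) ≤ w(X) b_N`. In particular `b` is submultiplicative, so
its growth rate exists by Fekete's lemma (`exists_tendsto_entSeq`). A split-generator `G` satisfies
`b_N ≤ const · w(Φ^N G)`, so `w(Φ^N G)` has the same growth rate, while
`δ̌(Φ^N E) ≤ w(E) b_N` shows that the growth rate of `δ̌(Φ^N E)` is at most that of `b`;
together with (i) for `G` this gives the equality. -/

/- Common definitions: filtrations, categorical complexity and entropy,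
(co-)t-structures, hearts/co-hearts, and associated entropy-type invariants. -/

open CategoryTheory CategoryTheory.Limits CategoryTheory.Pretriangulated Filter
open scoped ENNReal

universe w v u

namespace CatEnt

/-- Iterates of an endofunctor. -/
def iter {C : Type u} [Category.{v} C] (Φ : C ⥤ C) : ℕ → C ⥤ C
  | 0 => 𝟭 C
  | (n + 1) => iter Φ n ⋙ Φ

variable (C : Type u) [Category.{v} C] [Preadditive C] [HasZeroObject C]
  [HasShift C ℤ] [∀ n : ℤ, (shiftFunctor C n).Additive] [Pretriangulated C]
  [HasFiniteBiproducts C]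

/-- A filtration `0 = A 0 → A 1 → ⋯ → A m ≅ F` whose successive cones (factors)
are the objects `X i`, and all of whose objects lie in the class `S`. -/
def HasFiltrationIn (S : Set C) (F : C) {m : ℕ} (X : Fin m → C) : Prop :=
  ∃ A : Fin (m + 1) → C, IsZero (A 0) ∧ Nonempty (A (Fin.last m) ≅ F) ∧
    (∀ i, A i ∈ S) ∧
    ∀ i : Fin m, ∃ (f : A i.castSucc ⟶ A i.succ) (g : A i.succ ⟶ X i)
      (h : X i ⟶ (A i.castSucc)⟦(1 : ℤ)⟧), Triangle.mk f g h ∈ distTriang C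

/-- The categorical complexity `δ_t(E, F)` computed inside the class `S`:
the infimum of `∑ exp (k i * t)` over all filtrations of objects `F ⊞ F'`
(`F' ∈ S`) with factors the shifts `E⟦k i⟧`. -/
noncomputable def complexityIn (S : Set C) (t : ℝ) (E F : C) : ℝ≥0∞ :=
  sInf { c | ∃ (m : ℕ) (k : Fin m → ℤ) (F' : C), F' ∈ S ∧
    HasFiltrationIn C S (F ⊞ F') (fun i => E⟦k i⟧) ∧
    c = ENNReal.ofReal (∑ i, Real.exp ((k i : ℝ) * t)) }

/-- The categorical complexity `δ_t(E,F)` of Dimitrov–Haiden–Katzarkov–Kontsevich. -/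
noncomputable def complexity (t : ℝ) (E F : C) : ℝ≥0∞ :=
  complexityIn C Set.univ t E F

/-- `G` is a split-generator of the (triangulated sub)category determined by `S`. -/
def IsSplitGeneratorIn (S : Set C) (G : C) : Prop :=
  G ∈ S ∧ ∀ X ∈ S, ∃ (m : ℕ) (k : Fin m → ℤ) (F' : C), F' ∈ S ∧
    HasFiltrationIn C S (X ⊞ F') (fun i => G⟦k i⟧)

/-- `G` is a split-generator of `C`. -/
def IsSplitGenerator (G : C) : Prop := IsSplitGeneratorIn C Set.univ G

/-- The sequence `N ↦ (1/N) log (f N)`, with values in the extended reals. -/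
noncomputable def entSeq (f : ℕ → ℝ≥0∞) (N : ℕ) : EReal :=
  (((N : ℝ)⁻¹ : ℝ) : EReal) * ENNReal.log (f N)

/-- The categorical entropy of `Φ` restricted to `S`, computed with the
split-generator `G`: `limsup_N (1/N) log δ_t(G, Φ^N G)`. -/
noncomputable def entropyIn (S : Set C) (Φ : C ⥤ C) (G : C) (t : ℝ) : EReal :=
  Filter.limsup
    (entSeq (fun N => complexityIn C S t G ((iter Φ N).obj G))) Filter.atTop

/-- The categorical entropy `h_t(Φ)`, computed with the split-generator `G`. -/
noncomputable def entropy (Φ : C ⥤ C) (G : C) (t : ℝ) : EReal :=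
  entropyIn C Set.univ Φ G t

/-- `Φ^N` is not isomorphic to `0` on `S`, for all `N > 0`. -/
def PowersNonzeroOn (S : Set C) (Φ : C ⥤ C) : Prop :=
  ∀ N : ℕ, 0 < N → ∃ X ∈ S, ¬ IsZero ((iter Φ N).obj X)

/-- `Φ` maps the class `S` into itself. -/
def Preserves (S : Set C) (Φ : C ⥤ C) : Prop := ∀ X ∈ S, Φ.obj X ∈ S

section TStructure

/-- `(le, ge)` is a t-structure on the full triangulated subcategory of `C`
determined by `S` (take `S = Set.univ` for a t-structure on `C`). -/
structure IsTStructureIn (S le ge : Set C) : Prop where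
  le_sub : le ⊆ S
  ge_sub : ge ⊆ S
  le_iso : ∀ ⦃X Y : C⦄, (X ≅ Y) → X ∈ le → Y ∈ le
  ge_iso : ∀ ⦃X Y : C⦄, (X ≅ Y) → X ∈ ge → Y ∈ ge
  shift_le : ∀ X ∈ le, X⟦(1 : ℤ)⟧ ∈ le
  shift_ge : ∀ X ∈ ge, X⟦(-1 : ℤ)⟧ ∈ ge
  hom_zero : ∀ X ∈ le, ∀ Y : C, Y⟦(1 : ℤ)⟧ ∈ ge → ∀ f : X ⟶ Y, f = 0
  exists_triangle : ∀ E ∈ S, ∃ (D' F' : C), D' ∈ le ∧ F'⟦(1 : ℤ)⟧ ∈ ge ∧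
    ∃ (f : D' ⟶ E) (g : E ⟶ F') (h : F' ⟶ D'⟦(1 : ℤ)⟧),
      Triangle.mk f g h ∈ distTriang C

/-- Boundedness of a (co-)t-structure `(P, Q)` on the subcategory determined
by `S` : every object of `S` lies in some shift of `P` and in some shift of `Q`. -/
def IsBoundedIn (S P Q : Set C) : Prop :=
  ∀ E ∈ S, (∃ k : ℤ, E⟦k⟧ ∈ P) ∧ (∃ k : ℤ, E⟦k⟧ ∈ Q)

/-- The heart of a t-structure. -/
def heart (le ge : Set C) : Set C := le ∩ ge

/-- `X` is a simple object of the heart `H` : it is a nonzero object of `H`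
and in every extension `A → X → B` with `A, B ∈ H`, `A` or `B` vanishes. -/
def SimpleIn (H : Set C) (X : C) : Prop :=
  X ∈ H ∧ ¬ IsZero X ∧ ∀ A B : C, A ∈ H → B ∈ H →
    (∃ (f : A ⟶ X) (g : X ⟶ B) (h : B ⟶ A⟦(1 : ℤ)⟧),
      Triangle.mk f g h ∈ distTriang C) →
    IsZero A ∨ IsZero B

/-- `X` (an object of the heart `H`) has length `n`, i.e. admits a composition
series with `n` simple factors. -/
def HasLengthIn (H : Set C) (X : C) (n : ℕ) : Prop :=
  ∃ S : Fin n → C, (∀ i, SimpleIn C H (S i)) ∧ HasFiltrationIn C Set.univ X S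

/-- The heart `H` is finite : it is a length category having only finitely
many isomorphism classes of simple objects. -/
def FiniteHeart (H : Set C) : Prop :=
  (∀ X ∈ H, ∃ n : ℕ, HasLengthIn C H X n) ∧
  ∃ (n : ℕ) (S : Fin n → C), (∀ i, SimpleIn C H (S i)) ∧
    (∀ i j, i ≠ j → IsEmpty (S i ≅ S j)) ∧
    ∀ T, SimpleIn C H T → ∃ i, Nonempty (T ≅ S i)

/-- The invariant `δ̂_t` associated with a bounded t-structure with finite
heart `H` : the value `∑ λ(E i) * exp (k i * t)` on the (essentially unique)
t-filtration of `E`, with factors `(X i)⟦k i⟧`, `X i ∈ H`, `k` strictly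
decreasing (encoded as an infimum over all such filtrations). -/
noncomputable def tComplexity (H : Set C) (t : ℝ) (E : C) : ℝ≥0∞ :=
  sInf { c | ∃ (m : ℕ) (k : Fin m → ℤ) (X : Fin m → C) (lam : Fin m → ℕ),
    StrictAnti k ∧ (∀ i, X i ∈ H) ∧ (∀ i, HasLengthIn C H (X i) (lam i)) ∧
    HasFiltrationIn C Set.univ E (fun i => (X i)⟦k i⟧) ∧
    c = ENNReal.ofReal (∑ i, (lam i : ℝ) * Real.exp ((k i : ℝ) * t)) }

/-- The entropy-type invariant `ĥ_t` associated with a bounded t-structure with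
finite heart `H`, for the subcategory determined by `S` :
`sup_{E ∈ S} limsup_N (1/N) log δ̂_t(Φ^N E)`. -/
noncomputable def tEntropyIn (S H : Set C) (Φ : C ⥤ C) (t : ℝ) : EReal :=
  ⨆ E : {X : C // X ∈ S},
    Filter.limsup
      (entSeq (fun N => tComplexity C H t ((iter Φ N).obj E.1))) Filter.atTop

end TStructure

section CoTStructure

/-- `(ge, le)` is a co-t-structure on the full triangulated subcategory of `C`
determined by `S` (take `S = Set.univ` for a co-t-structure on `C`). -/
structure IsCoTStructureIn (S ge le : Set C) : Prop where
  ge_sub : ge ⊆ S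
  le_sub : le ⊆ S
  ge_iso : ∀ ⦃X Y : C⦄, (X ≅ Y) → X ∈ ge → Y ∈ ge
  le_iso : ∀ ⦃X Y : C⦄, (X ≅ Y) → X ∈ le → Y ∈ le
  ge_summand : ∀ X Y : C, (X ⊞ Y) ∈ ge → X ∈ ge
  le_summand : ∀ X Y : C, (X ⊞ Y) ∈ le → X ∈ le
  shift_ge : ∀ X ∈ ge, X⟦(-1 : ℤ)⟧ ∈ ge
  shift_le : ∀ X ∈ le, X⟦(1 : ℤ)⟧ ∈ le
  hom_zero : ∀ X : C, X⟦(1 : ℤ)⟧ ∈ ge → ∀ Y ∈ le, ∀ f : X ⟶ Y, f = 0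
  exists_triangle : ∀ E ∈ S, ∃ (D' F' : C), D'⟦(1 : ℤ)⟧ ∈ ge ∧ F' ∈ le ∧
    ∃ (f : D' ⟶ E) (g : E ⟶ F') (h : F' ⟶ D'⟦(1 : ℤ)⟧),
      Triangle.mk f g h ∈ distTriang C

/-- The co-heart of a co-t-structure. -/
def coheart (ge le : Set C) : Set C := ge ∩ le

/-- `X` is an indecomposable object of the co-heart `H`. -/
def IndecIn (H : Set C) (X : C) : Prop :=
  X ∈ H ∧ ¬ IsZero X ∧ ∀ A B : C, Nonempty (X ≅ A ⊞ B) → IsZero A ∨ IsZero B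

/-- `X` (an object of the co-heart `H`) is a direct sum of `n` indecomposable
objects, i.e. `σ(X) = n`. -/
def HasSummandCountIn (H : Set C) (X : C) (n : ℕ) : Prop :=
  ∃ M : Fin n → C, (∀ i, IndecIn C H (M i)) ∧ Nonempty (X ≅ ⨁ M)

/-- The co-heart `H` is finite : it is a Krull–Schmidt category (decompositions
into indecomposables exist and are essentially unique) having only finitely many
isomorphism classes of indecomposable objects. -/
def FiniteCoheart (H : Set C) : Prop :=
  (∀ X ∈ H, ∃ n : ℕ, HasSummandCountIn C H X n) ∧
  (∀ X ∈ H, ∀ (n m : ℕ) (M : Fin n → C) (N : Fin m → C),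
    (∀ i, IndecIn C H (M i)) → (∀ j, IndecIn C H (N j)) →
    Nonempty (X ≅ ⨁ M) → Nonempty (X ≅ ⨁ N) →
    ∃ e : Fin n ≃ Fin m, ∀ i, Nonempty (M i ≅ N (e i))) ∧
  ∃ (n : ℕ) (M : Fin n → C), (∀ i, IndecIn C H (M i)) ∧
    (∀ i j, i ≠ j → IsEmpty (M i ≅ M j)) ∧
    ∀ T, IndecIn C H T → ∃ i, Nonempty (T ≅ M i)

/-- The invariant `δ̌_t` associated with a bounded co-t-structure with finite
co-heart `H` : the infimum, over all co-t-filtrations of `E` (filtrations with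
factors `(X i)⟦k i⟧`, `X i ∈ H`, `k` strictly increasing), of
`∑ σ(X i) * exp (k i * t)`. -/
noncomputable def coComplexity (H : Set C) (t : ℝ) (E : C) : ℝ≥0∞ :=
  sInf { c | ∃ (m : ℕ) (k : Fin m → ℤ) (X : Fin m → C) (s : Fin m → ℕ),
    StrictMono k ∧ (∀ i, X i ∈ H) ∧ (∀ i, HasSummandCountIn C H (X i) (s i)) ∧
    HasFiltrationIn C Set.univ E (fun i => (X i)⟦k i⟧) ∧
    c = ENNReal.ofReal (∑ i, (s i : ℝ) * Real.exp ((k i : ℝ) * t)) }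

/-- The entropy-type invariant `ȟ_t` associated with a bounded co-t-structure
with finite co-heart `H`, for the subcategory determined by `S`. -/
noncomputable def coEntropyIn (S H : Set C) (Φ : C ⥤ C) (t : ℝ) : EReal :=
  ⨆ E : {X : C // X ∈ S},
    Filter.limsup
      (entSeq (fun N => coComplexity C H t ((iter Φ N).obj E.1))) Filter.atTop

end CoTStructure

end CatEnt

namespace CatEnt

/-- A model for the bounded derived category `D^b(K)` of `K`-vector spaces:
the homotopy category of cochain complexes of `K`-modules (over a field, every
complex of vector spaces is homotopy equivalent to its cohomology), in which we
single out the objects with bounded finite-dimensional cohomology. -/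
abbrev Db (K : Type) [Field K] :=
  HomotopyCategory (ModuleCat.{0} K) (ComplexShape.up ℤ)

/-- The dimension of the `k`-th cohomology of an object of `D^b(K)`. -/
noncomputable def cohomDim (K : Type) [Field K] (V : Db K) (k : ℤ) : ℕ :=
  Module.finrank K
    ((HomotopyCategory.homologyFunctor (ModuleCat.{0} K) (ComplexShape.up ℤ) k).obj V)

/-- `V` lies in `D^b(K)`: it has bounded, finite-dimensional cohomology. -/
def MemDb (K : Type) [Field K] (V : Db K) : Prop :=
  {k : ℤ | ¬ CategoryTheory.Limits.IsZero
      ((HomotopyCategory.homologyFunctor (ModuleCat.{0} K) (ComplexShape.up ℤ) k).obj V)}.Finite ∧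
  ∀ k : ℤ, Module.Finite K
    ((HomotopyCategory.homologyFunctor (ModuleCat.{0} K) (ComplexShape.up ℤ) k).obj V)

/-- The object `K` of `D^b(K)`, concentrated in degree `0`. -/
noncomputable def unitDb (K : Type) [Field K] : Db K :=
  (HomotopyCategory.quotient (ModuleCat.{0} K) (ComplexShape.up ℤ)).obj
    ((HomologicalComplex.single (ModuleCat.{0} K) (ComplexShape.up ℤ) 0).obj
      (ModuleCat.of K K))

/-- The weighted dimension sum `∑_{k ∈ ℤ} dim H^{-k}(V) e^{k t}`. -/
noncomputable def dimSumNeg (K : Type) [Field K] (V : Db K) (t : ℝ) : ℝ≥0∞ :=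
  ∑' k : ℤ, (cohomDim K V (-k) : ℝ≥0∞) * ENNReal.ofReal (Real.exp ((k : ℝ) * t))

end CatEnt

open CatEnt CategoryTheory.Pretriangulated.Opposite

/-! ### Co-t-structures -/

namespace CatEnt

section CoT

set_option linter.unusedSectionVars false

variable {D : Type u} [Category.{v} D] [Preadditive D]
    [HasZeroObject D] [HasShift D ℤ] [∀ n : ℤ, (shiftFunctor D n).Additive]
    [Pretriangulated D] [HasFiniteBiproducts D]

/-- `X` lies in `Σ^a S`. -/
def InShift (S : Set D) (a : ℤ) (X : D) : Prop := X⟦-a⟧ ∈ S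

/-- Split monomorphisms split off a direct summand; the cone of the monomorphism serves as a
complement, so idempotent completeness plays no role. -/
lemma exists_complement {X Z : D} (i : X ⟶ Z) (r : Z ⟶ X) (hir : i ≫ r = 𝟙 X) :
    ∃ W, Nonempty (Z ≅ X ⊞ W) := by
  obtain ⟨W, g, h, hT⟩ := distinguished_cocone_triangle i
  have : Mono i := mono_of_mono_fac hir
  have h0 := Triangle.mor₃_eq_zero_of_mono₁ _ hT this
  obtain ⟨e, -⟩ := exists_iso_binaryBiproduct_of_distTriang _ hT h0
  exact ⟨W, ⟨e⟩⟩

lemma mem_of_retract {S : Set D} (hiso : ∀ ⦃X Y : D⦄, (X ≅ Y) → X ∈ S → Y ∈ S)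
    (hsum : ∀ X Y : D, (X ⊞ Y) ∈ S → X ∈ S) {X Z : D} (i : X ⟶ Z) (r : Z ⟶ X)
    (hir : i ≫ r = 𝟙 X) (hZ : Z ∈ S) : X ∈ S := by
  obtain ⟨W, ⟨e⟩⟩ := exists_complement i r hir
  exact hsum X W (hiso e hZ)

lemma inShift_shift {S : Set D} (hiso : ∀ ⦃X Y : D⦄, (X ≅ Y) → X ∈ S → Y ∈ S) {a n b : ℤ}
    (hb : b = a + n) {X : D} (hX : InShift S a X) : InShift S b (X⟦n⟧) :=
  hiso ((shiftFunctorAdd' D n (-b) (-a) (by lia)).app X) hX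

lemma inShift_of_retract {S : Set D} (hiso : ∀ ⦃X Y : D⦄, (X ≅ Y) → X ∈ S → Y ∈ S)
    (hsum : ∀ X Y : D, (X ⊞ Y) ∈ S → X ∈ S) {a : ℤ} {X Z : D} (i : X ⟶ Z) (r : Z ⟶ X)
    (hir : i ≫ r = 𝟙 X) (hZ : InShift S a Z) : InShift S a X :=
  mem_of_retract hiso hsum (i⟦-a⟧') (r⟦-a⟧')
    (by rw [← Functor.map_comp, hir, CategoryTheory.Functor.map_id]) hZ

lemma ge_mono_aux {ge : Set D} (hiso : ∀ ⦃X Y : D⦄, (X ≅ Y) → X ∈ ge → Y ∈ ge)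
    (hs : ∀ X ∈ ge, X⟦(-1 : ℤ)⟧ ∈ ge) {a b : ℤ} (hab : a ≤ b) {X : D}
    (hX : InShift ge a X) : InShift ge b X := by
  obtain ⟨n, rfl⟩ := Int.le.dest hab
  induction n with
  | zero => simpa using hX
  | succ n ih =>
    exact hiso ((shiftFunctorAdd' D (-(a + n)) (-1) (-(a + (n + 1 : ℕ)))
      (by push_cast; ring)).app X).symm (hs _ (ih (by lia)))

lemma le_mono_aux {le : Set D} (hiso : ∀ ⦃X Y : D⦄, (X ≅ Y) → X ∈ le → Y ∈ le)
    (hs : ∀ X ∈ le, X⟦(1 : ℤ)⟧ ∈ le) {a b : ℤ} (hab : a ≤ b) {X : D}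
    (hX : InShift le b X) : InShift le a X := by
  obtain ⟨n, rfl⟩ := Int.le.dest hab
  induction n with
  | zero => simpa using hX
  | succ n ih =>
    refine ih (by lia) (hiso ((shiftFunctorAdd' D (-(a + (n + 1 : ℕ))) 1 (-(a + n))
      (by push_cast; ring)).app X).symm (hs _ hX))

lemma distinguished_change₂ {X Y Z : D} {f : X ⟶ Y} {g : Y ⟶ Z} {h : Z ⟶ X⟦(1 : ℤ)⟧}
    (hT : Triangle.mk f g h ∈ distTriang D) {Y' : D} (e : Y ≅ Y') :
    Triangle.mk (f ≫ e.hom) (e.inv ≫ g) h ∈ distTriang D := by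
  have h1 : (f ≫ e.hom) ≫ e.inv = 𝟙 X ≫ f := by simp
  have h2 : (e.inv ≫ g) ≫ 𝟙 Z = e.inv ≫ g := by simp
  have h3 : h ≫ (𝟙 X)⟦(1 : ℤ)⟧' = 𝟙 Z ≫ h := by simp
  exact isomorphic_distinguished _ hT _
    (Triangle.isoMk _ _ (Iso.refl _) e.symm (Iso.refl _) h1 h2 h3)

lemma distinguished_change₁ {X Y Z : D} {f : X ⟶ Y} {g : Y ⟶ Z} {h : Z ⟶ X⟦(1 : ℤ)⟧}
    (hT : Triangle.mk f g h ∈ distTriang D) {X' : D} (e : X ≅ X') :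
    Triangle.mk (e.inv ≫ f) g (h ≫ e.hom⟦(1 : ℤ)⟧') ∈ distTriang D := by
  have h1 : (e.inv ≫ f) ≫ 𝟙 Y = e.inv ≫ f := by simp
  have h2 : g ≫ 𝟙 Z = 𝟙 Y ≫ g := by simp
  have h3 : (h ≫ e.hom⟦(1 : ℤ)⟧') ≫ e.inv⟦(1 : ℤ)⟧' = 𝟙 Z ≫ h := by simp
  exact isomorphic_distinguished _ hT _
    (Triangle.isoMk _ _ e.symm (Iso.refl _) (Iso.refl _) h1 h2 h3)

lemma distinguished_change₃ {X Y Z : D} {f : X ⟶ Y} {g : Y ⟶ Z} {h : Z ⟶ X⟦(1 : ℤ)⟧}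
    (hT : Triangle.mk f g h ∈ distTriang D) {Z' : D} (e : Z ≅ Z') :
    Triangle.mk f (g ≫ e.hom) (e.inv ≫ h) ∈ distTriang D := by
  have h1 : f ≫ 𝟙 Y = 𝟙 X ≫ f := by simp
  have h2 : (g ≫ e.hom) ≫ e.inv = 𝟙 Y ≫ g := by simp
  have h3 : (e.inv ≫ h) ≫ (𝟙 X)⟦(1 : ℤ)⟧' = e.inv ≫ h := by simp
  exact isomorphic_distinguished _ hT _
    (Triangle.isoMk _ _ (Iso.refl _) (Iso.refl _) e.symm h1 h2 h3)

variable {ge le : Set D} (hco : IsCoTStructureIn D Set.univ ge le)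
include hco

lemma coT_hom_zero {a : ℤ} {X Y : D} (hX : InShift ge (a - 1) X) (hY : InShift le a Y)
    (f : X ⟶ Y) : f = 0 := by
  have h := hco.hom_zero (X⟦-a⟧) (hco.ge_iso ((shiftFunctorAdd' D (-a) 1 (-(a - 1))
    (by ring)).app X) hX) _ hY (f⟦-a⟧')
  exact (shiftFunctor D (-a)).map_injective (by rw [h, Functor.map_zero])

/-- The decomposition triangle of `X` with respect to the `a`-th shift of the co-t-structure. -/
lemma coT_triangle (a : ℤ) (X : D) : ∃ (D' F' : D) (f : D' ⟶ X) (g : X ⟶ F')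
    (h : F' ⟶ D'⟦(1 : ℤ)⟧), Triangle.mk f g h ∈ distTriang D ∧ InShift ge (a - 1) D' ∧
      InShift le a F' := by
  obtain ⟨D₀, F₀, hD, hF, f, g, h, hT⟩ := hco.exists_triangle (X⟦-a⟧) (Set.mem_univ _)
  let T' := (Triangle.shiftFunctor D a).obj (Triangle.mk f g h)
  have hT' : T' ∈ distTriang D := Triangle.shift_distinguished _ hT a
  refine ⟨T'.obj₁, T'.obj₃, _, _, _, distinguished_change₂ hT'
    ((shiftFunctorCompIsoId D (-a) a (by ring)).app X), ?_, ?_⟩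
  · exact hco.ge_iso ((shiftFunctorAdd' D a (-(a - 1)) 1 (by ring)).app D₀) hD
  · exact hco.le_iso ((shiftFunctorCompIsoId D a (-a) (by ring)).symm.app F₀) hF

lemma coT_ge_iff {a : ℤ} {X : D} :
    InShift ge (a - 1) X ↔ ∀ Y, InShift le a Y → ∀ f : X ⟶ Y, f = 0 := by
  refine ⟨fun hX Y hY f => coT_hom_zero hco hX hY f, fun H => ?_⟩
  obtain ⟨D', F', f, g, h, hT, hD, hF⟩ := coT_triangle hco a X
  obtain ⟨s, hs⟩ := Triangle.coyoneda_exact₂ _ hT (𝟙 X) ((Category.id_comp _).trans (H _ hF g))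
  exact inShift_of_retract hco.ge_iso hco.ge_summand s f hs.symm hD

lemma coT_le_iff {a : ℤ} {Y : D} :
    InShift le a Y ↔ ∀ X, InShift ge (a - 1) X → ∀ f : X ⟶ Y, f = 0 := by
  refine ⟨fun hY X hX f => coT_hom_zero hco hX hY f, fun H => ?_⟩
  obtain ⟨D', F', f, g, h, hT, hD, hF⟩ := coT_triangle hco a Y
  obtain ⟨s, hs⟩ := Triangle.yoneda_exact₂ _ hT (𝟙 Y) ((Category.comp_id _).trans (H _ hD f))
  exact inShift_of_retract hco.le_iso hco.le_summand g s hs.symm hF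

lemma coT_ge_ext {a : ℤ} {T : Triangle D} (hT : T ∈ distTriang D) (h1 : InShift ge a T.obj₁)
    (h3 : InShift ge a T.obj₃) : InShift ge a T.obj₂ := by
  obtain ⟨b, rfl⟩ : ∃ b, a = b - 1 := ⟨a + 1, by ring⟩
  rw [coT_ge_iff hco]
  intro Y hY f
  obtain ⟨g, rfl⟩ := T.yoneda_exact₂ hT f (coT_hom_zero hco h1 hY _)
  rw [coT_hom_zero hco h3 hY g, comp_zero]

lemma coT_le_ext {a : ℤ} {T : Triangle D} (hT : T ∈ distTriang D) (h1 : InShift le a T.obj₁)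
    (h3 : InShift le a T.obj₃) : InShift le a T.obj₂ := by
  rw [coT_le_iff hco]
  intro Y hY f
  obtain ⟨g, rfl⟩ := T.coyoneda_exact₂ hT f (coT_hom_zero hco hY h3 _)
  rw [coT_hom_zero hco hY h1 g, zero_comp]

lemma coT_ge_mono {a b : ℤ} (hab : a ≤ b) {X : D} (hX : InShift ge a X) : InShift ge b X :=
  ge_mono_aux hco.ge_iso hco.shift_ge hab hX

lemma coT_le_mono {a b : ℤ} (hab : a ≤ b) {X : D} (hX : InShift le b X) : InShift le a X :=
  le_mono_aux hco.le_iso hco.shift_le hab hX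

/-- Dévissage: a property of pairs `(a, X)` with `X ∈ Σ^a D_{≥0}` holds as soon as it holds for
`X ∈ Σ^a C` and can be deduced for `X` from its validity for the first terms of all decomposition
triangles of `X` at level `a`. -/
lemma coT_induction (hbd : IsBoundedIn D Set.univ ge le) (P : ℤ → D → Prop)
    (base : ∀ a X, InShift ge a X → InShift le a X → P a X)
    (step : ∀ a X, InShift ge a X →
      (∀ (D' F' : D) (f : D' ⟶ X) (g : X ⟶ F') (h : F' ⟶ D'⟦(1 : ℤ)⟧),
        Triangle.mk f g h ∈ distTriang D → InShift ge (a - 1) D' → InShift le a F' →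
          P (a - 1) D') → P a X)
    (a : ℤ) (X : D) (hX : InShift ge a X) : P a X := by
  have key : ∀ (d : ℕ) (a : ℤ) (X : D), InShift ge a X → InShift le (a - d) X → P a X := by
    intro d
    induction d with
    | zero => intro a X h1 h2; exact base a X h1 (by simpa using h2)
    | succ d ih =>
      intro a X h1 h2
      refine step a X h1 fun D' F' f g h hT hD hF => ih _ _ hD ?_
      have h2' : InShift le (a - 1 - d) X := by convert h2 using 1; push_cast; ring
      refine coT_le_ext hco (inv_rot_of_distTriang _ hT) ?_ h2'
      exact coT_le_mono hco (by lia) (inShift_shift hco.le_iso (b := a - 1) (by ring) hF)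
  obtain ⟨-, k, hk⟩ := hbd X (Set.mem_univ _)
  have hk' : InShift le (-k) X := by unfold InShift; rwa [neg_neg]
  exact key (a - min a (-k)).toNat a X hX
    (coT_le_mono hco (by have := min_le_right a (-k); have := min_le_left a (-k); lia) hk')

/-- The third term of a decomposition triangle of `X ∈ Σ^a D_{≥0}` at level `a` lies in `Σ^a C`. -/
lemma coT_coheart {a : ℤ} {X D' F' : D} {f : D' ⟶ X} {g : X ⟶ F'} {h : F' ⟶ D'⟦(1 : ℤ)⟧}
    (hT : Triangle.mk f g h ∈ distTriang D) (hX : InShift ge a X) (hD : InShift ge (a - 1) D') :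
    InShift ge a F' :=
  coT_ge_ext hco (rot_of_distTriang _ hT) hX (inShift_shift hco.ge_iso (by ring) hD)

end CoT
end CatEnt

/-! ### Cohomology theories and weights -/

namespace CatEnt

section Biproduct

variable {D : Type u} [Category.{v} D] [Preadditive D] [HasFiniteBiproducts D]

/-- Inclusion of the sum of all summands but the `i`-th one. -/
noncomputable def complIn {n : ℕ} (M : Fin (n + 1) → D) (i : Fin (n + 1)) :
    (⨁ fun j => M (i.succAbove j)) ⟶ ⨁ M :=
  biproduct.desc fun j => biproduct.ι M (i.succAbove j)

/-- Projection onto the sum of all summands but the `i`-th one. -/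
noncomputable def complOut {n : ℕ} (M : Fin (n + 1) → D) (i : Fin (n + 1)) :
    ⨁ M ⟶ (⨁ fun j => M (i.succAbove j)) :=
  biproduct.lift fun j => biproduct.π M (i.succAbove j)

variable {n : ℕ} (M : Fin (n + 1) → D) (i : Fin (n + 1))

lemma complIn_out : complIn M i ≫ complOut M i = 𝟙 _ := by
  ext j k
  by_cases h : j = k
  · subst h; simp [complIn, complOut]
  · have h' : i.succAbove k ≠ i.succAbove j := fun e => h (Fin.succAbove_right_injective e).symm
    simp [complIn, complOut, biproduct.ι_π_ne _ h', biproduct.ι_π_ne _ (Ne.symm h)]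

lemma complIn_π : complIn M i ≫ biproduct.π M i = 0 := by
  ext j
  simp [complIn]

lemma ι_complOut : biproduct.ι M i ≫ complOut M i = 0 := by
  ext j
  simp [complOut, biproduct.ι_π_ne _ (Fin.succAbove_ne i j).symm]

lemma compl_total :
    biproduct.π M i ≫ biproduct.ι M i + complOut M i ≫ complIn M i = 𝟙 _ := by
  have : complOut M i ≫ complIn M i =
      ∑ j, biproduct.π M (i.succAbove j) ≫ biproduct.ι M (i.succAbove j) := by
    simp [complOut, complIn, biproduct.lift_desc]
  rw [this, ← biproduct.total, Fin.sum_univ_succAbove _ i]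

/-- The split short complex exhibiting the `i`-th summand as a quotient. -/
noncomputable def complSplitting :
    (ShortComplex.mk (complIn M i) (biproduct.π M i) (complIn_π M i)).Splitting where
  r := complOut M i
  s := biproduct.ι M i
  f_r := complIn_out M i
  s_g := by simp
  id := (add_comm _ _).trans (compl_total M i)

end Biproduct

section Coh

set_option linter.unusedSectionVars false

/-- A length function on an abelian category, additive on short exact sequences. -/
structure LengthFn (A : Type*) [Category A] [Abelian A] where
  /-- the length of an object -/
  len : A → ℝ≥0∞
  len_zero : ∀ X, IsZero X → len X = 0
  len_le : ∀ S : ShortComplex A, S.Exact → len S.X₂ ≤ len S.X₁ + len S.X₃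
  len_add : ∀ S : ShortComplex A, S.ShortExact → len S.X₂ = len S.X₁ + len S.X₃

lemma LengthFn.len_iso {A : Type*} [Category A] [Abelian A] (L : LengthFn A) {X Y : A}
    (e : X ≅ Y) : L.len X = L.len Y := by
  have key : ∀ {X Y : A}, (X ≅ Y) → L.len Y ≤ L.len X := by
    intro X Y e
    have hZ := isZero_zero A
    have h := L.len_le (ShortComplex.mk e.hom (hZ.from_ Y) (hZ.eq_of_tgt _ _))
      ((ShortComplex.exact_iff_epi _ (hZ.eq_of_tgt _ _)).2 (by dsimp; infer_instance))
    simpa [L.len_zero _ hZ] using h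
  exact le_antisymm (key e.symm) (key e)

/-- A graded homological functor `(h^k)_{k ∈ ℤ}` from `D` to an abelian category `A`: each `h^k`
is homological, and `h^k(Σ^n X)` is naturally isomorphic to `h^{k+n}(X)`. -/
structure CohTheory (D : Type u) [Category.{v} D] [Preadditive D] [HasZeroObject D]
    [HasShift D ℤ] [∀ n : ℤ, (shiftFunctor D n).Additive] [Pretriangulated D]
    (A : Type*) [Category A] [Abelian A] where
  /-- the functor in degree `k` -/
  h : ℤ → D ⥤ A
  homological : ∀ k, (h k).IsHomological
  shiftIso : ∀ k n, Nonempty (shiftFunctor D n ⋙ h k ≅ h (k + n))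

variable {D : Type u} [Category.{v} D] [Preadditive D]
    [HasZeroObject D] [HasShift D ℤ] [∀ n : ℤ, (shiftFunctor D n).Additive]
    [Pretriangulated D] {A : Type*} [Category A] [Abelian A]

instance (T : CohTheory D A) (k : ℤ) : (T.h k).IsHomological := T.homological k

/-- The weighted total length `∑_k len(h^{-k}(X)) e^{kt}`. -/
noncomputable def CohTheory.weight (T : CohTheory D A) (L : LengthFn A) (t : ℝ) (X : D) : ℝ≥0∞ :=
  ∑' k : ℤ, L.len ((T.h (-k)).obj X) * ENNReal.ofReal (Real.exp ((k : ℝ) * t))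

namespace CohTheory

variable (T : CohTheory D A) (L : LengthFn A) (t : ℝ)

lemma map_shift_eq_zero_iff {X Y : D} (f : X ⟶ Y) (k n l : ℤ) (hl : l = k + n) :
    (T.h k).map (f⟦n⟧') = 0 ↔ (T.h l).map f = 0 := by
  subst hl
  obtain ⟨e⟩ := T.shiftIso k n
  have h := e.hom.naturality f
  dsimp at h
  constructor
  · intro h0
    rw [h0, zero_comp] at h
    rw [← cancel_epi (e.hom.app X), ← h, comp_zero]
  · intro h0
    rw [h0, comp_zero] at h
    rw [← cancel_mono (e.hom.app Y), h, zero_comp]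

lemma isZero_shift_iff (X : D) (k n l : ℤ) (hl : l = k + n) :
    IsZero ((T.h k).obj (X⟦n⟧)) ↔ IsZero ((T.h l).obj X) := by
  subst hl
  obtain ⟨e⟩ := T.shiftIso k n
  exact (e.app X).isZero_iff

lemma weight_iso {X Y : D} (e : X ≅ Y) : T.weight L t X = T.weight L t Y :=
  tsum_congr fun k => by rw [L.len_iso ((T.h (-k)).mapIso e)]

lemma weight_zero {X : D} (hX : IsZero X) : T.weight L t X = 0 := by
  unfold weight
  rw [ENNReal.tsum_eq_zero]
  intro k
  rw [L.len_zero _ ((T.h (-k)).map_isZero hX), zero_mul]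

lemma weight_shift (X : D) (n : ℤ) :
    T.weight L t (X⟦n⟧) = ENNReal.ofReal (Real.exp ((n : ℝ) * t)) * T.weight L t X := by
  unfold weight
  rw [← ENNReal.tsum_mul_left, ← (Equiv.addRight n).tsum_eq]
  refine tsum_congr fun k => ?_
  obtain ⟨e⟩ := T.shiftIso (-(k + n)) n
  have h1 : L.len ((T.h (-(k + n))).obj (X⟦n⟧)) = L.len ((T.h (-k)).obj X) := by
    refine (L.len_iso (e.app X)).trans ?_
    rw [show -(k + n) + n = -k by ring]
  simp only [Equiv.coe_addRight]
  rw [h1, mul_left_comm, ← ENNReal.ofReal_mul (Real.exp_pos _).le, ← Real.exp_add]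
  congr 4
  push_cast
  ring

lemma weight_triangle {X Y Z : D} {f : X ⟶ Y} {g : Y ⟶ Z} {h : Z ⟶ X⟦(1 : ℤ)⟧}
    (hT : Triangle.mk f g h ∈ distTriang D) :
    T.weight L t Y ≤ T.weight L t X + T.weight L t Z := by
  unfold weight
  rw [← ENNReal.tsum_add]
  refine ENNReal.tsum_le_tsum fun k => ?_
  rw [← add_mul]
  gcongr
  exact L.len_le _ ((T.h (-k)).map_distinguished_exact _ hT)

lemma weight_triangle_eq {X Y Z : D} {f : X ⟶ Y} {g : Y ⟶ Z} {h : Z ⟶ X⟦(1 : ℤ)⟧}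
    (hT : Triangle.mk f g h ∈ distTriang D) (h0 : ∀ k, (T.h k).map h = 0) :
    T.weight L t Y = T.weight L t X + T.weight L t Z := by
  unfold weight
  rw [← ENNReal.tsum_add]
  refine tsum_congr fun k => ?_
  rw [← add_mul]
  congr 1
  have e2 := (T.h (-k)).map_distinguished_exact _ hT
  have e3 := (T.h (-k)).map_distinguished_exact _ (rot_of_distTriang _ hT)
  have e1 := (T.h (-k)).map_distinguished_exact _ (inv_rot_of_distTriang _ hT)
  have m : Mono ((T.h (-k)).map f) := by
    have key : ∀ q : (X⟦(1 : ℤ)⟧)⟦(-1 : ℤ)⟧ ⟶ X, (T.h (-k)).map (-((h⟦(-1 : ℤ)⟧') ≫ q)) = 0 := by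
      intro q
      rw [Functor.map_neg, Functor.map_comp,
        (T.map_shift_eq_zero_iff h (-k) (-1) (-k + -1) rfl).2 (h0 _), zero_comp, neg_zero]
    exact e1.mono_g (key _)
  have p : Epi ((T.h (-k)).map g) := e3.epi_f (h0 _)
  exact L.len_add _ { exact := e2, mono_f := m, epi_g := p }

lemma weight_filtration {F : D} {m : ℕ} {X : Fin m → D}
    (hF : HasFiltrationIn D Set.univ F X) : T.weight L t F ≤ ∑ i, T.weight L t (X i) := by
  obtain ⟨B, h0, ⟨e⟩, -, hB⟩ := hF
  rw [← T.weight_iso L t e]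
  clear e
  induction m with
  | zero => rw [show Fin.last 0 = 0 from rfl, T.weight_zero L t h0]; simp
  | succ m ih =>
    rw [Fin.sum_univ_castSucc]
    obtain ⟨f, g, h, hT⟩ := hB (Fin.last m)
    refine (T.weight_triangle L t hT).trans ?_
    gcongr
    exact ih (X := fun i => X i.castSucc) (fun i => B i.castSucc) h0 fun i => hB i.castSucc

variable [HasFiniteBiproducts D]

lemma weight_retract (X Y : D) : T.weight L t X ≤ T.weight L t (X ⊞ Y) := by
  have h := T.weight_triangle_eq L t (binaryBiproductTriangle_distinguished X Y) (by simp)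
  exact h ▸ le_self_add

lemma weight_biproduct {n : ℕ} (M : Fin n → D) :
    T.weight L t (⨁ M) = ∑ i, T.weight L t (M i) := by
  induction n with
  | zero =>
    rw [T.weight_zero L t]
    · simp
    · rw [IsZero.iff_id_eq_zero]
      ext j
      exact j.elim0
  | succ n ih =>
    rw [Fin.sum_univ_succ, add_comm (T.weight L t (M 0))]
    have := ih fun j => M j.succ
    rw [← this]
    unfold weight
    rw [← ENNReal.tsum_add]
    refine tsum_congr fun k => ?_
    rw [← add_mul]
    congr 1
    exact L.len_add _ (((complSplitting M 0).map (T.h (-k))).shortExact)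

end CohTheory
end Coh
end CatEnt

/-! ### Co-t-filtrations and weights -/

namespace CatEnt

section Good

set_option linter.unusedSectionVars false

variable {D : Type u} [Category.{v} D] [Preadditive D]
    [HasZeroObject D] [HasShift D ℤ] [∀ n : ℤ, (shiftFunctor D n).Additive]
    [Pretriangulated D] [HasFiniteBiproducts D]

/-- `X` admits a co-t-filtration of cost `c` all of whose factors have shift at most `a`. -/
def HasCoFiltration (H : Set D) (t : ℝ) (a : ℤ) (X : D) (c : ℝ≥0∞) : Prop :=
  ∃ (m : ℕ) (k : Fin m → ℤ) (Y : Fin m → D) (s : Fin m → ℕ),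
    StrictMono k ∧ (∀ i, k i ≤ a) ∧ (∀ i, Y i ∈ H) ∧ (∀ i, HasSummandCountIn D H (Y i) (s i)) ∧
    HasFiltrationIn D Set.univ X (fun i => (Y i)⟦k i⟧) ∧
    c = ENNReal.ofReal (∑ i, (s i : ℝ) * Real.exp ((k i : ℝ) * t))

/-- `Y` is an extension of `Z` by `X`. -/
def IsExt (X Y Z : D) : Prop :=
  ∃ (f : X ⟶ Y) (g : Y ⟶ Z) (h : Z ⟶ X⟦(1 : ℤ)⟧), Triangle.mk f g h ∈ distTriang D

lemma hasFiltration_snoc {m : ℕ} {X Y Z : D} {W : Fin m → D} {Z' : D}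
    (hX : HasFiltrationIn D Set.univ X W) (hY : IsExt X Y Z) (e : Z ≅ Z') :
    HasFiltrationIn D Set.univ Y (Fin.snoc (α := fun _ => D) W Z') := by
  obtain ⟨B, h0, ⟨e0⟩, -, hB⟩ := hX
  obtain ⟨f, g, h, hT⟩ := hY
  refine ⟨Fin.snoc (α := fun _ => D) B Y, ?_, ⟨eqToIso (by rw [Fin.snoc_last])⟩,
    fun i => Set.mem_univ _, ?_⟩
  · rwa [← Fin.castSucc_zero, Fin.snoc_castSucc]
  intro i
  change IsExt _ _ _
  induction i using Fin.lastCases with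
  | last =>
    rw [Fin.snoc_castSucc, Fin.succ_last, Fin.snoc_last, Fin.snoc_last]
    exact ⟨_, _, _, distinguished_change₃ (distinguished_change₁ hT e0.symm) e⟩
  | cast i =>
    rw [Fin.snoc_castSucc, Fin.snoc_castSucc, Fin.succ_castSucc, Fin.snoc_castSucc]
    exact hB i

lemma HasCoFiltration.zero {H : Set D} {t : ℝ} {a : ℤ} {X : D} (hX : IsZero X) :
    HasCoFiltration H t a X 0 :=
  ⟨0, Fin.elim0, Fin.elim0, Fin.elim0, fun i => i.elim0, fun i => i.elim0, fun i => i.elim0,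
    fun i => i.elim0, ⟨fun _ => X, hX, ⟨Iso.refl _⟩, fun _ => Set.mem_univ _, fun i => i.elim0⟩,
    by simp⟩

lemma HasCoFiltration.snoc {H : Set D} {t : ℝ} {a : ℤ} {X Y Z E : D} {c : ℝ≥0∞} {n : ℕ}
    (hX : HasCoFiltration H t (a - 1) X c) (hY : IsExt X Y Z) (e : Z ≅ E⟦a⟧) (hE : E ∈ H)
    (hn : HasSummandCountIn D H E n) :
    HasCoFiltration H t a Y (c + n * ENNReal.ofReal (Real.exp ((a : ℝ) * t))) := by
  obtain ⟨m, k, W, s, hk, hka, hW, hs, hF, rfl⟩ := hX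
  refine ⟨m + 1, Fin.snoc (α := fun _ => ℤ) k a, Fin.snoc (α := fun _ => D) W E,
    Fin.snoc (α := fun _ => ℕ) s n, ?_, ?_, ?_, ?_, ?_, ?_⟩
  · intro i j hij
    induction j using Fin.lastCases with
    | last =>
      obtain ⟨i, rfl⟩ := Fin.exists_castSucc_eq.2 hij.ne
      rw [Fin.snoc_castSucc, Fin.snoc_last]
      have := hka i
      lia
    | cast j =>
      obtain ⟨i, rfl⟩ := Fin.exists_castSucc_eq.2 (hij.trans (Fin.castSucc_lt_last j)).ne
      rw [Fin.snoc_castSucc, Fin.snoc_castSucc]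
      exact hk (by simpa using hij)
  · intro i
    induction i using Fin.lastCases with
    | last => rw [Fin.snoc_last]
    | cast i => rw [Fin.snoc_castSucc]; have := hka i; lia
  · intro i
    induction i using Fin.lastCases with
    | last => rwa [Fin.snoc_last]
    | cast i => rw [Fin.snoc_castSucc]; exact hW i
  · intro i
    induction i using Fin.lastCases with
    | last => rwa [Fin.snoc_last, Fin.snoc_last]
    | cast i => rw [Fin.snoc_castSucc, Fin.snoc_castSucc]; exact hs i
  · convert hasFiltration_snoc hF hY e using 1
    funext i
    induction i using Fin.lastCases with
    | last => simp only [Fin.snoc_last]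
    | cast i => simp only [Fin.snoc_castSucc]
  · rw [Fin.sum_univ_castSucc]
    simp only [Fin.snoc_castSucc, Fin.snoc_last]
    rw [ENNReal.ofReal_add (by positivity) (by positivity),
      ENNReal.ofReal_mul (q := Real.exp _) (by positivity), ENNReal.ofReal_natCast]

lemma HasCoFiltration.coComplexity_le {H : Set D} {t : ℝ} {a : ℤ} {X : D} {c : ℝ≥0∞}
    (h : HasCoFiltration H t a X c) : coComplexity D H t X ≤ c := by
  obtain ⟨m, k, W, s, hk, -, hW, hs, hF, rfl⟩ := h
  exact sInf_le ⟨m, k, W, s, hk, hW, hs, hF, rfl⟩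

/-- The weight of an object is bounded by the cost of any of its co-t-filtrations, multiplied by
the total weight of the indecomposables of the co-heart. -/
lemma weight_le_coComplexity_mul {A : Type*} [Category A] [Abelian A] (T : CohTheory D A)
    (L : LengthFn A) {H : Set D} {t : ℝ} {r : ℕ} (M : Fin r → D)
    (hM : ∀ X, IndecIn D H X → ∃ i, Nonempty (X ≅ M i)) {X : D} {c : ℝ≥0∞}
    (hc : ∃ (m : ℕ) (k : Fin m → ℤ) (Y : Fin m → D) (s : Fin m → ℕ),
      StrictMono k ∧ (∀ i, Y i ∈ H) ∧ (∀ i, HasSummandCountIn D H (Y i) (s i)) ∧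
      HasFiltrationIn D Set.univ X (fun i => (Y i)⟦k i⟧) ∧
      c = ENNReal.ofReal (∑ i, (s i : ℝ) * Real.exp ((k i : ℝ) * t))) :
    T.weight L t X ≤ c * ∑ i, T.weight L t (M i) := by
  obtain ⟨m, k, Y, s, -, -, hs, hF, rfl⟩ := hc
  have h1 : ∀ (E : D) (n : ℕ), HasSummandCountIn D H E n →
      T.weight L t E ≤ n * ∑ i, T.weight L t (M i) := by
    rintro E n ⟨N, hN, ⟨e⟩⟩
    rw [T.weight_iso L t e, T.weight_biproduct]
    refine (Finset.sum_le_card_nsmul _ _ (∑ i, T.weight L t (M i)) fun j _ => ?_).trans ?_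
    · obtain ⟨i, ⟨e'⟩⟩ := hM _ (hN j)
      rw [T.weight_iso L t e']
      exact Finset.single_le_sum (f := fun i => T.weight L t (M i)) (fun _ _ => zero_le)
        (Finset.mem_univ i)
    · simp
  refine (T.weight_filtration L t hF).trans ?_
  rw [ENNReal.ofReal_sum_of_nonneg fun i _ => by positivity, Finset.sum_mul]
  refine Finset.sum_le_sum fun i _ => ?_
  rw [T.weight_shift, ENNReal.ofReal_mul (by positivity), ENNReal.ofReal_natCast,
    mul_comm (s i : ℝ≥0∞), mul_assoc]
  gcongr
  exact h1 _ _ (hs i)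

end Good

section Split

set_option linter.unusedSectionVars false

variable {D : Type u} [Category.{v} D] [Preadditive D]
    [HasZeroObject D] [HasShift D ℤ] [∀ n : ℤ, (shiftFunctor D n).Additive]
    [Pretriangulated D]

/-- If `g : X ⟶ F` factors through the summand `F₁` of its cone, then replacing `F` by `F₁`
replaces the fibre of `g` by one of its direct summands. -/
lemma exists_smaller_triangle {D' X F F₁ : D} {f : D' ⟶ X} {g : X ⟶ F} {δ : F ⟶ D'⟦(1 : ℤ)⟧}
    (hT : Triangle.mk f g δ ∈ distTriang D) (p : F ⟶ F₁) (j : F₁ ⟶ F) (hjp : j ≫ p = 𝟙 F₁)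
    (hg : g ≫ p ≫ j = g) :
    ∃ (D₁ : D) (f₁ : D₁ ⟶ X) (δ₁ : F₁ ⟶ D₁⟦(1 : ℤ)⟧) (i : D₁ ⟶ D') (r : D' ⟶ D₁),
      Triangle.mk f₁ (g ≫ p) δ₁ ∈ distTriang D ∧ i ≫ r = 𝟙 D₁ := by
  obtain ⟨D₁, f₁, δ₁, hT₁⟩ := distinguished_cocone_triangle₁ (g ≫ p)
  have c1 : (g ≫ p) ≫ j = 𝟙 X ≫ g := by simpa using hg
  have c2 : g ≫ p = 𝟙 X ≫ g ≫ p := by simp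
  obtain ⟨α, hα1, hα2⟩ := complete_distinguished_triangle_morphism₁ _ _ hT₁ hT (𝟙 X) j c1
  obtain ⟨β, hβ1, hβ2⟩ := complete_distinguished_triangle_morphism₁ _ _ hT hT₁ (𝟙 X) p c2
  let φ : Triangle.mk f₁ (g ≫ p) δ₁ ⟶ Triangle.mk f g δ := ⟨α, 𝟙 X, j, hα1, c1, hα2⟩
  let ψ : Triangle.mk f g δ ⟶ Triangle.mk f₁ (g ≫ p) δ₁ := ⟨β, 𝟙 X, p, hβ1, c2, hβ2⟩
  have h2 : IsIso (φ ≫ ψ).hom₂ := by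
    change IsIso (𝟙 X ≫ 𝟙 X)
    infer_instance
  have h3 : IsIso (φ ≫ ψ).hom₃ := by
    change IsIso (j ≫ p)
    rw [hjp]
    infer_instance
  have h1 : IsIso (α ≫ β) := isIso₁_of_isIso₂₃ (φ ≫ ψ) hT₁ hT₁ h2 h3
  obtain ⟨γ, hγ, -⟩ := h1.out
  exact ⟨D₁, f₁, δ₁, α, β ≫ γ, hT₁, (Category.assoc _ _ _).symm.trans hγ⟩

variable [HasFiniteBiproducts D]

/-- If the connecting morphism `δ` is a split monomorphism on the `i`-th summand of the third
term, then that summand can be cancelled. -/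
lemma exists_cancel {D' X : D} {n : ℕ} {M : Fin (n + 1) → D} {a : ℤ} {f : D' ⟶ X}
    {g : X ⟶ (⨁ M)⟦a⟧} {δ : (⨁ M)⟦a⟧ ⟶ D'⟦(1 : ℤ)⟧} (hT : Triangle.mk f g δ ∈ distTriang D)
    (i : Fin (n + 1)) (r : D'⟦(1 : ℤ)⟧ ⟶ (M i)⟦a⟧)
    (hr : (biproduct.ι M i)⟦a⟧' ≫ δ ≫ r = 𝟙 _) :
    ∃ (D₁ : D) (f₁ : D₁ ⟶ X) (g₁ : X ⟶ (⨁ fun j => M (i.succAbove j))⟦a⟧)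
      (δ₁ : (⨁ fun j => M (i.succAbove j))⟦a⟧ ⟶ D₁⟦(1 : ℤ)⟧) (j : D₁ ⟶ D') (q : D' ⟶ D₁),
      Triangle.mk f₁ g₁ δ₁ ∈ distTriang D ∧ j ≫ q = 𝟙 D₁ := by
  have hgδ : g ≫ δ = 0 := comp_distTriang_mor_zero₂₃ _ hT
  have e1 : (biproduct.ι M i)⟦a⟧' ≫ (complOut M i)⟦a⟧' = 0 := by
    rw [← Functor.map_comp, ι_complOut, Functor.map_zero]
  have e2 : (complIn M i)⟦a⟧' ≫ (complOut M i)⟦a⟧' = 𝟙 _ := by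
    rw [← Functor.map_comp, complIn_out, CategoryTheory.Functor.map_id]
  have e3 : (complOut M i)⟦a⟧' ≫ (complIn M i)⟦a⟧' =
      𝟙 _ - (biproduct.π M i)⟦a⟧' ≫ (biproduct.ι M i)⟦a⟧' := by
    rw [eq_sub_iff_add_eq', ← Functor.map_comp, ← Functor.map_comp, ← Functor.map_add,
      compl_total, CategoryTheory.Functor.map_id]
  generalize (biproduct.ι M i)⟦a⟧' = ι at *
  generalize (biproduct.π M i)⟦a⟧' = π at *
  generalize (complIn M i)⟦a⟧' = cI at *
  generalize (complOut M i)⟦a⟧' = cO at *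
  obtain ⟨D₁, f₁, δ₁, j, q, h, h'⟩ := exists_smaller_triangle hT cO (cI ≫ (𝟙 _ - δ ≫ r ≫ ι))
    (by simp [Preadditive.comp_sub, e1, e2]) (by
      have : cO ≫ cI ≫ (𝟙 _ - δ ≫ r ≫ ι) = 𝟙 _ - δ ≫ r ≫ ι := by
        rw [← Category.assoc, e3, Preadditive.sub_comp, Category.id_comp]
        have : (π ≫ ι) ≫ (𝟙 _ - δ ≫ r ≫ ι) = 0 := by
          have h2 : ι ≫ δ ≫ r ≫ ι = ι := by
            rw [← Category.assoc δ, ← Category.assoc, hr, Category.id_comp]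
          simp [Preadditive.comp_sub, h2]
        rw [this, sub_zero]
      rw [this, Preadditive.comp_sub, ← Category.assoc, hgδ]
      simp)
  exact ⟨D₁, f₁, _, δ₁, j, q, h, h'⟩

end Split

section Key

set_option linter.unusedSectionVars false

variable {D : Type u} [Category.{v} D] [Preadditive D]
    [HasZeroObject D] [HasShift D ℤ] [∀ n : ℤ, (shiftFunctor D n).Additive]
    [Pretriangulated D] [HasFiniteBiproducts D] {A : Type*} [Category A] [Abelian A]

lemma map_biproduct_ne_zero {n : ℕ} (F : D ⥤ A) [F.Additive] {X : D} {M : Fin n → D} {a : ℤ}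
    (δ : (⨁ M)⟦a⟧ ⟶ X) (h : F.map δ ≠ 0) : ∃ i, F.map ((biproduct.ι M i)⟦a⟧' ≫ δ) ≠ 0 := by
  by_contra! H
  apply h
  have : δ = ∑ i, (biproduct.π M i)⟦a⟧' ≫ (biproduct.ι M i)⟦a⟧' ≫ δ := by
    simp_rw [← Category.assoc, ← Functor.map_comp]
    rw [← Preadditive.sum_comp, ← Functor.map_sum, biproduct.total,
      CategoryTheory.Functor.map_id, Category.id_comp]
  rw [this, Functor.map_sum]
  refine Finset.sum_eq_zero fun i _ => ?_
  rw [F.map_comp, H i, comp_zero]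

lemma map_biproduct_ne_zero' {n : ℕ} (F : D ⥤ A) [F.Additive] {X : D} {M : Fin n → D} {a : ℤ}
    (δ : X ⟶ (⨁ M)⟦a⟧) (h : F.map δ ≠ 0) : ∃ i, F.map (δ ≫ (biproduct.π M i)⟦a⟧') ≠ 0 := by
  by_contra! H
  apply h
  have : δ = ∑ i, (δ ≫ (biproduct.π M i)⟦a⟧') ≫ (biproduct.ι M i)⟦a⟧' := by
    simp_rw [Category.assoc, ← Functor.map_comp]
    rw [← Preadditive.comp_sum, ← Functor.map_sum, biproduct.total,
      CategoryTheory.Functor.map_id, Category.comp_id]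
  rw [this, Functor.map_sum]
  refine Finset.sum_eq_zero fun i _ => ?_
  rw [F.map_comp, H i, zero_comp]

lemma isZero_biproduct {n : ℕ} (F : D ⥤ A) [F.Additive] {M : Fin n → D}
    (h : ∀ i, IsZero (F.obj (M i))) : IsZero (F.obj (⨁ M)) := by
  rw [IsZero.iff_id_eq_zero, ← CategoryTheory.Functor.map_id, ← biproduct.total, Functor.map_sum]
  refine Finset.sum_eq_zero fun i _ => ?_
  rw [F.map_comp, (h i).eq_of_tgt (F.map (biproduct.π M i)) 0, zero_comp]

variable {ge le : Set D} (hco : IsCoTStructureIn D Set.univ ge le)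
  (hbd : IsBoundedIn D Set.univ ge le)
  (hdec : ∀ X ∈ coheart D ge le, ∃ n, HasSummandCountIn D (coheart D ge le) X n)
  (T : CohTheory D A)
  (hz : ∀ M, IndecIn D (coheart D ge le) M → ∀ k, k ≠ 0 → IsZero ((T.h k).obj M))

include hdec hz in
lemma isZero_of_coheart {c j : ℤ} {Y : D} (h1 : InShift ge c Y) (h2 : InShift le c Y)
    (hj : j + c ≠ 0) : IsZero ((T.h j).obj Y) := by
  obtain ⟨n, M, hM, ⟨e⟩⟩ := hdec (Y⟦-c⟧) ⟨h1, h2⟩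
  rw [← T.isZero_shift_iff Y (j + c) (-c) j (by ring)]
  exact (isZero_biproduct _ fun i => hz _ (hM i) _ hj).of_iso ((T.h (j + c)).mapIso e)

include hco hbd hdec hz in
/-- If the co-heart has cohomology only in degree `0`, then `Σ^c D_{≥0}` has no cohomology in
degrees below `-c`. -/
lemma isZero_of_ge (c : ℤ) (Y : D) (hY : InShift ge c Y) :
    ∀ j, j + c < 0 → IsZero ((T.h j).obj Y) := by
  refine coT_induction hco hbd (fun c Y => ∀ j, j + c < 0 → IsZero ((T.h j).obj Y)) ?_ ?_ c Y hY
  · intro c Y h1 h2 j hj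
    exact isZero_of_coheart hdec T hz h1 h2 hj.ne
  · intro c Y h1 ih j hj
    obtain ⟨D', F', f, g, h, hT, hD, hF⟩ := coT_triangle hco c Y
    have z1 : IsZero ((T.h j).obj D') := ih D' F' f g h hT hD hF j (by lia)
    have z3 : IsZero ((T.h j).obj F') :=
      isZero_of_coheart hdec T hz (coT_coheart hco hT h1 hD) hF hj.ne
    exact ((T.h j).map_distinguished_exact _ hT).isZero_of_both_zeros
      (z1.eq_of_src _ _) (z3.eq_of_tgt _ _)

variable (hrad : ∀ E F, IndecIn D (coheart D ge le) E → IndecIn D (coheart D ge le) F →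
  ∀ (f : E ⟶ F) (k : ℤ), (T.h k).map f ≠ 0 → IsIso f)

include hco hbd hdec hz hrad in
/-- A connecting morphism `δ : Σ^a(⨁ M) ⟶ ΣD'`, with `D' ∈ Σ^{a-1} D_{≥0}`, which is visible in
cohomology is a split monomorphism on one of the summands `Σ^a M_i`: composing `δ` with the
projection of `ΣD'` to its top co-heart factor yields a morphism in the co-heart, up to shift,
which is nonzero in cohomology, hence has an invertible matrix entry. -/
lemma exists_retraction {a k : ℤ} {D' : D} (hD : InShift ge (a - 1) D') {n : ℕ} {M : Fin n → D}
    (hM : ∀ i, IndecIn D (coheart D ge le) (M i)) (δ : (⨁ M)⟦a⟧ ⟶ D'⟦(1 : ℤ)⟧)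
    (hδ : (T.h k).map δ ≠ 0) :
    ∃ (i : Fin n) (r : D'⟦(1 : ℤ)⟧ ⟶ (M i)⟦a⟧), (biproduct.ι M i)⟦a⟧' ≫ δ ≫ r = 𝟙 _ := by
  obtain ⟨i, hi⟩ := map_biproduct_ne_zero (T.h k) δ hδ
  have hk : k + a = 0 := by
    by_contra hk
    exact hi (((T.isZero_shift_iff (M i) k a _ rfl).2 (hz _ (hM i) _ hk)).eq_of_src _ _)
  obtain ⟨D₂, F₂, f₂, q, h₂, hT₂, hD₂, hF₂⟩ := coT_triangle hco (a - 1) D'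
  have hm : Mono ((T.h (k + 1)).map q) :=
    ((T.h (k + 1)).map_distinguished_exact _ hT₂).mono_g
      ((isZero_of_ge hco hbd hdec T hz _ _ hD₂ (k + 1) (by lia)).eq_of_src _ _)
  have hm' : Mono ((T.h k).map (q⟦(1 : ℤ)⟧')) := by
    obtain ⟨e⟩ := T.shiftIso k 1
    have := e.hom.naturality q
    dsimp at this
    have h3 : Mono ((T.h k).map (q⟦(1 : ℤ)⟧') ≫ e.hom.app F₂) := by
      rw [this]
      infer_instance
    exact mono_of_mono _ (e.hom.app F₂)
  obtain ⟨l, N, hN, ⟨e⟩⟩ := hdec ((F₂⟦(1 : ℤ)⟧)⟦-a⟧)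
    ⟨inShift_shift hco.ge_iso (by ring) (coT_coheart hco hT₂ hD hD₂),
      inShift_shift hco.le_iso (by ring) hF₂⟩
  let e' : F₂⟦(1 : ℤ)⟧ ≅ (⨁ N)⟦a⟧ :=
    (shiftFunctorCompIsoId D (-a) a (by ring)).symm.app _ ≪≫ (shiftFunctor D a).mapIso e
  have hne : ∀ {Y : D} (x : Y ⟶ D'⟦(1 : ℤ)⟧), (T.h k).map x ≠ 0 →
      (T.h k).map (x ≫ q⟦(1 : ℤ)⟧' ≫ e'.hom) ≠ 0 := by
    intro Y x hx h0
    rw [Functor.map_comp, Functor.map_comp, ← Category.assoc] at h0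
    have h1 := (cancel_mono ((T.h k).map e'.hom)).1 (h0.trans zero_comp.symm)
    exact hx ((cancel_mono ((T.h k).map (q⟦(1 : ℤ)⟧'))).1 (h1.trans zero_comp.symm))
  obtain ⟨j, hj⟩ := map_biproduct_ne_zero' (T.h k)
    (((biproduct.ι M i)⟦a⟧' ≫ δ) ≫ q⟦(1 : ℤ)⟧' ≫ e'.hom) (hne _ hi)
  obtain ⟨f, hf⟩ := (shiftFunctor D a).map_surjective
    ((((biproduct.ι M i)⟦a⟧' ≫ δ) ≫ q⟦(1 : ℤ)⟧' ≫ e'.hom) ≫ (biproduct.π N j)⟦a⟧')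
  rw [← hf] at hj
  have hfi : IsIso f := hrad _ _ (hM i) (hN j) f (k + a)
    (fun h0 => hj ((T.map_shift_eq_zero_iff f k a _ rfl).2 h0))
  refine ⟨i, q⟦(1 : ℤ)⟧' ≫ e'.hom ≫ (biproduct.π N j)⟦a⟧' ≫ inv (f⟦a⟧'), ?_⟩
  have : f⟦a⟧' ≫ inv (f⟦a⟧') = 𝟙 _ := IsIso.hom_inv_id _
  nth_rw 1 [hf] at this
  simpa only [Category.assoc] using this

include hco hbd hdec hz hrad in
/-- A decomposition triangle at level `a` in which the number of indecomposable summands of the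
co-heart part is minimal has a connecting morphism that vanishes in cohomology. -/
lemma exists_minimal_triangle {a : ℤ} {X : D} (hX : InShift ge a X) :
    ∃ (n : ℕ) (M : Fin n → D) (D' : D) (f : D' ⟶ X) (g : X ⟶ (⨁ M)⟦a⟧)
      (δ : (⨁ M)⟦a⟧ ⟶ D'⟦(1 : ℤ)⟧), (∀ i, IndecIn D (coheart D ge le) (M i)) ∧
      Triangle.mk f g δ ∈ distTriang D ∧ InShift ge (a - 1) D' ∧
      ∀ k, (T.h k).map δ = 0 := by
  let Q : ℕ → Prop := fun n => ∃ (M : Fin n → D) (D' : D) (f : D' ⟶ X) (g : X ⟶ (⨁ M)⟦a⟧)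
      (δ : (⨁ M)⟦a⟧ ⟶ D'⟦(1 : ℤ)⟧), (∀ i, IndecIn D (coheart D ge le) (M i)) ∧
      Triangle.mk f g δ ∈ distTriang D ∧ InShift ge (a - 1) D'
  have hQ : ∃ n, Q n := by
    obtain ⟨D', F', f, g, h, hT, hD, hF⟩ := coT_triangle hco a X
    obtain ⟨n, M, hM, ⟨e⟩⟩ := hdec (F'⟦-a⟧) ⟨coT_coheart hco hT hX hD, hF⟩
    let e' : F' ≅ (⨁ M)⟦a⟧ :=
      (shiftFunctorCompIsoId D (-a) a (by ring)).symm.app _ ≪≫ (shiftFunctor D a).mapIso e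
    exact ⟨n, M, D', _, _, _, hM, distinguished_change₃ hT e', hD⟩
  classical
  obtain ⟨n, ⟨M, D', f, g, δ, hM, hT, hD⟩, hmin⟩ :
      ∃ n, Q n ∧ ∀ m, m < n → ¬ Q m := ⟨Nat.find hQ, Nat.find_spec hQ, fun m => Nat.find_min hQ⟩
  refine ⟨n, M, D', f, g, δ, hM, hT, hD, fun k => ?_⟩
  by_contra hk
  obtain ⟨i, r, hr⟩ := exists_retraction hco hbd hdec T hz hrad hD hM δ hk
  cases n with
  | zero => exact i.elim0
  | succ n =>
    obtain ⟨D₁, f₁, g₁, δ₁, j, q, hT₁, hjq⟩ := exists_cancel hT i r hr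
    exact hmin n n.lt_succ_self ⟨_, D₁, f₁, g₁, δ₁, fun l => hM _, hT₁,
      inShift_of_retract hco.ge_iso hco.ge_summand j q hjq hD⟩

include hco in
lemma inShift_le_biproduct {a : ℤ} {n : ℕ} {M : Fin n → D} (hM : ∀ i, M i ∈ le) :
    InShift le a ((⨁ M)⟦a⟧) := by
  rw [coT_le_iff hco]
  intro Y hY f
  have h : f = ∑ i, (f ≫ (biproduct.π M i)⟦a⟧') ≫ (biproduct.ι M i)⟦a⟧' := by
    simp_rw [Category.assoc, ← Functor.map_comp]
    rw [← Preadditive.comp_sum, ← Functor.map_sum, biproduct.total,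
      CategoryTheory.Functor.map_id, Category.comp_id]
  rw [h]
  refine Finset.sum_eq_zero fun i _ => ?_
  have hi : InShift le a ((M i)⟦a⟧) :=
    hco.le_iso ((shiftFunctorCompIsoId D a (-a) (by ring)).symm.app (M i)) (hM i)
  rw [coT_hom_zero hco hY hi (f ≫ _), zero_comp]

include hco hbd hdec hz hrad in
/-- If the cohomology theory detects the indecomposables of the co-heart, then every object has a
co-t-filtration whose cost is at most its weight. -/
lemma exists_coFiltration_le_weight (L : LengthFn A) (t : ℝ)
    (hw : ∀ M, IndecIn D (coheart D ge le) M → T.weight L t M = 1) (X : D) :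
    ∃ a c, HasCoFiltration (coheart D ge le) t a X c ∧ c ≤ T.weight L t X := by
  obtain ⟨⟨k, hk⟩, -⟩ := hbd X (Set.mem_univ _)
  have hX : InShift ge (-k) X := by unfold InShift; rwa [neg_neg]
  refine ⟨-k, coT_induction hco hbd
    (fun a X => ∃ c, HasCoFiltration (coheart D ge le) t a X c ∧ c ≤ T.weight L t X)
    ?_ ?_ _ _ hX⟩
  · intro a X h1 h2
    obtain ⟨n, M, hM, ⟨e⟩⟩ := hdec (X⟦-a⟧) ⟨h1, h2⟩
    let e' : X ≅ (X⟦-a⟧)⟦a⟧ := (shiftFunctorCompIsoId D (-a) a (by ring)).symm.app _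
    refine ⟨_, (HasCoFiltration.zero (isZero_zero D)).snoc (Y := X) (Z := X)
      ⟨0, 𝟙 X, 0, contractible_distinguished₁ X⟩ e' ⟨h1, h2⟩ ⟨M, hM, ⟨e⟩⟩, ?_⟩
    rw [T.weight_iso L t (e' ≪≫ (shiftFunctor D a).mapIso e), T.weight_shift, T.weight_biproduct,
      Finset.sum_congr rfl fun i _ => hw _ (hM i)]
    simp [mul_comm]
  · intro a X hX ih
    obtain ⟨n, M, D', f, g, δ, hM, hT, hD, hδ⟩ :=
      exists_minimal_triangle hco hbd hdec T hz hrad hX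
    have hF1 : InShift ge a ((⨁ M)⟦a⟧) := coT_coheart hco hT hX hD
    have hF2 : InShift le a ((⨁ M)⟦a⟧) := inShift_le_biproduct hco fun i => (hM i).1.2
    obtain ⟨c, hc, hcw⟩ := ih D' _ f g δ hT hD hF2
    have hH : (⨁ M) ∈ coheart D ge le :=
      ⟨hco.ge_iso ((shiftFunctorCompIsoId D a (-a) (by ring)).app _) hF1,
        hco.le_iso ((shiftFunctorCompIsoId D a (-a) (by ring)).app _) hF2⟩
    refine ⟨_, hc.snoc ⟨f, g, δ, hT⟩ (Iso.refl _) hH ⟨M, hM, ⟨Iso.refl _⟩⟩, ?_⟩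
    rw [T.weight_triangle_eq L t hT hδ, T.weight_shift, T.weight_biproduct,
      Finset.sum_congr rfl fun i _ => hw _ (hM i)]
    refine add_le_add hcw (le_of_eq ?_)
    simp [mul_comm]

end Key
end CatEnt

/-! ### The cohomology theories of exact functors to vector spaces -/

namespace CatEnt

section Concrete

variable (K : Type) [Field K]

/-- The dimension as a length function on vector spaces, with value `∞` on infinite-dimensional
spaces. -/
noncomputable def dimLength : LengthFn (ModuleCat.{0} K) where
  len V := ((Module.length K V : ℕ∞) : ℝ≥0∞)
  len_zero V hV := by
    have := ModuleCat.isZero_iff_subsingleton.1 hV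
    simp
  len_le S hS := by
    rw [← ENat.toENNReal_add, ENat.toENNReal_le]
    have h := hS.moduleCat_range_eq_ker
    rw [Module.length_eq_add_of_exact (LinearMap.ker S.g.hom).subtype S.g.hom.rangeRestrict
      (Submodule.subtype_injective _) S.g.hom.surjective_rangeRestrict (by
        rw [LinearMap.exact_iff]; simp)]
    refine add_le_add ?_ (Module.length_le_of_injective (Submodule.subtype _)
      (Submodule.subtype_injective _))
    rw [← h]
    exact Module.length_le_of_surjective S.f.hom.rangeRestrict S.f.hom.surjective_rangeRestrict
  len_add S hS := by
    rw [← ENat.toENNReal_add, ENat.toENNReal_inj]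
    exact Module.length_eq_add_of_exact S.f.hom S.g.hom hS.moduleCat_injective_f
      hS.moduleCat_surjective_g
      ((ShortComplex.ShortExact.moduleCat_exact_iff_function_exact S).1 hS.exact)

/-- The dual length function, on the opposite category of vector spaces. -/
noncomputable def dimLengthOp : LengthFn (ModuleCat.{0} K)ᵒᵖ where
  len V := (dimLength K).len V.unop
  len_zero V hV := (dimLength K).len_zero _ hV.unop
  len_le S hS := by
    rw [add_comm]
    exact (dimLength K).len_le S.unop hS.unop
  len_add S hS := by
    rw [add_comm]
    exact (dimLength K).len_add S.unop hS.unop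

/-- The cohomology functors on the homotopy category of complexes of vector spaces. -/
noncomputable abbrev cohom (k : ℤ) : Db K ⥤ ModuleCat.{0} K :=
  HomotopyCategory.homologyFunctor (ModuleCat.{0} K) (ComplexShape.up ℤ) k

lemma dimLength_cohom {V : Db K} (hV : MemDb K V) (k : ℤ) :
    (dimLength K).len ((cohom K k).obj V) = (cohomDim K V k : ℝ≥0∞) := by
  have := hV.2 k
  change ((Module.length K _ : ℕ∞) : ℝ≥0∞) = ((Module.finrank K _ : ℕ) : ℝ≥0∞)
  rw [Module.length_eq_finrank, ENat.toENNReal_coe]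

lemma dimSumNeg_lt_top {V : Db K} (hV : MemDb K V) (t : ℝ) : dimSumNeg K V t < ⊤ := by
  unfold dimSumNeg
  have hfin := hV.1.image (fun k => -k)
  rw [tsum_eq_sum (s := hfin.toFinset)]
  · exact ENNReal.sum_lt_top.2 fun k _ =>
      ENNReal.mul_lt_top (ENNReal.natCast_lt_top _) ENNReal.ofReal_lt_top
  · intro k hk
    have hz : IsZero ((cohom K (-k)).obj V) := by
      by_contra h
      exact hk (hfin.mem_toFinset.2 ⟨-k, h, neg_neg k⟩)
    have := ModuleCat.isZero_iff_subsingleton.1 hz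
    have : cohomDim K V (-k) = 0 := Module.finrank_zero_of_subsingleton
    simp [this]

/-- The cohomology of a complex concentrated in degree `0`. -/
noncomputable def cohomUnitIso (k : ℤ) : (cohom K k).obj (unitDb K) ≅
    ((HomologicalComplex.single (ModuleCat.{0} K) (ComplexShape.up ℤ) 0).obj
      (ModuleCat.of K K)).homology k :=
  (HomotopyCategory.homologyFunctorFactors (ModuleCat.{0} K) (ComplexShape.up ℤ) k).app _

lemma isZero_cohom_unit {k : ℤ} (hk : k ≠ 0) : IsZero ((cohom K k).obj (unitDb K)) :=
  (HomologicalComplex.isZero_single_obj_homology (ComplexShape.up ℤ) 0 _ k hk).of_iso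
    (cohomUnitIso K k)

lemma dimLength_cohom_unit : (dimLength K).len ((cohom K 0).obj (unitDb K)) = 1 := by
  rw [(dimLength K).len_iso (cohomUnitIso K 0 ≪≫
    HomologicalComplex.singleObjHomologySelfIso (ComplexShape.up ℤ) 0 _)]
  change ((Module.length K K : ℕ∞) : ℝ≥0∞) = 1
  simp

variable {K}
variable {D : Type u} [Category.{v} D] [Preadditive D]
    [HasZeroObject D] [HasShift D ℤ] [∀ n : ℤ, (shiftFunctor D n).Additive]
    [Pretriangulated D]

lemma nonempty_cohom_shift (k n : ℤ) :
    Nonempty (shiftFunctor (Db K) n ⋙ cohom K k ≅ cohom K (k + n)) :=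
  ⟨(HomotopyCategory.homologyFunctor (ModuleCat.{0} K) (ComplexShape.up ℤ) 0).shiftIso n k (k + n)
    (add_comm n k)⟩

/-- The cohomology theory `X ↦ H^k(Γ X)` attached to an exact functor `Γ`. -/
noncomputable def cohTheory (Γ : D ⥤ Db K) [Γ.CommShift ℤ] [Γ.IsTriangulated] :
    CohTheory D (ModuleCat.{0} K) where
  h k := Γ ⋙ cohom K k
  homological k := inferInstance
  shiftIso k n := by
    obtain ⟨e⟩ := nonempty_cohom_shift (K := K) k n
    exact ⟨(Functor.associator _ _ _).symm ≪≫
      Functor.isoWhiskerRight (Γ.commShiftIso n) (cohom K k) ≪≫ Functor.associator _ _ _ ≪≫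
      Functor.isoWhiskerLeft Γ e⟩

/-- The cohomology theory `X ↦ H^{-k}(Γ' X)` attached to a contravariant exact functor `Γ'`, with
values in the opposite category of vector spaces. -/
noncomputable def cohTheoryOp (Γ' : Dᵒᵖ ⥤ Db K) [Γ'.CommShift ℤ] [Γ'.IsTriangulated] :
    CohTheory D (ModuleCat.{0} K)ᵒᵖ where
  h k := (Γ' ⋙ cohom K (-k)).rightOp
  homological k :=
    { map_zero X Y := by
        have h : (Γ' ⋙ cohom K (-k)).map (0 : X ⟶ Y).op = 0 := by
          rw [op_zero, Functor.map_zero]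
        exact congrArg Quiver.Hom.op h
      exact T hT := (Functor.map_distinguished_op_exact (Γ' ⋙ cohom K (-k)) T hT).op }
  shiftIso k n := by
    obtain ⟨e⟩ := nonempty_cohom_shift (K := K) (-k) (-n)
    have e' : shiftFunctor Dᵒᵖ (-n) ⋙ Γ' ⋙ cohom K (-k) ≅ Γ' ⋙ cohom K (-(k + n)) :=
      (Functor.associator _ _ _).symm ≪≫
        Functor.isoWhiskerRight (Γ'.commShiftIso (-n)) (cohom K (-k)) ≪≫
        Functor.associator _ _ _ ≪≫ Functor.isoWhiskerLeft Γ' e ≪≫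
        eqToIso (by rw [neg_add])
    have e'' : (shiftFunctor D n).op ⋙ Γ' ⋙ cohom K (-k) ≅ Γ' ⋙ cohom K (-(k + n)) :=
      Functor.isoWhiskerRight (shiftFunctorOpIso D (-n) n (by ring)).symm _ ≪≫ e'
    exact ⟨NatIso.ofComponents (fun X => (e''.app (Opposite.op X)).op.symm)
      (fun {X Y} f => Quiver.Hom.unop_inj (e''.inv.naturality f.op).symm)⟩

variable (t : ℝ)

lemma weight_cohTheory (Γ : D ⥤ Db K) [Γ.CommShift ℤ] [Γ.IsTriangulated]
    {X : D} (hX : MemDb K (Γ.obj X)) :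
    (cohTheory Γ).weight (dimLength K) t X = dimSumNeg K (Γ.obj X) t :=
  tsum_congr fun k => congrArg (· * _) (dimLength_cohom K hX (-k))

lemma weight_cohTheoryOp (Γ' : Dᵒᵖ ⥤ Db K) [Γ'.CommShift ℤ] [Γ'.IsTriangulated]
    {X : D} (hX : MemDb K (Γ'.obj (Opposite.op X))) :
    (cohTheoryOp Γ').weight (dimLengthOp K) t X = dimSumNeg K (Γ'.obj (Opposite.op X)) (-t) := by
  unfold CohTheory.weight dimSumNeg
  rw [← (Equiv.neg ℤ).tsum_eq]
  refine tsum_congr fun k => ?_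
  simp only [Equiv.neg_apply]
  have h : (dimLengthOp K).len (((cohTheoryOp Γ').h (- -k)).obj X) =
      (cohomDim K (Γ'.obj (Opposite.op X)) (-k) : ℝ≥0∞) := by
    rw [neg_neg]
    exact dimLength_cohom K hX (-k)
  rw [h]
  push_cast
  rw [neg_mul, mul_neg]

/-- The cohomology theory sees the indecomposable objects of `H` as objects of weight `1`
concentrated in degree `0`, and a morphism between two of them that is nonzero in cohomology is an
isomorphism. -/
structure Detects {A : Type*} [Category A] [Abelian A] (T : CohTheory D A) (L : LengthFn A)
    (t : ℝ) [HasFiniteBiproducts D] (H : Set D) : Prop where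
  zero : ∀ M, IndecIn D H M → ∀ k, k ≠ 0 → IsZero ((T.h k).obj M)
  weight : ∀ M, IndecIn D H M → T.weight L t M = 1
  rad : ∀ E F, IndecIn D H E → IndecIn D H F →
    ∀ (f : E ⟶ F) (k : ℤ), (T.h k).map f ≠ 0 → IsIso f

lemma weight_eq_of_zero {A : Type*} [Category A] [Abelian A] (T : CohTheory D A)
    (L : LengthFn A) {M : D} (h : ∀ k, k ≠ 0 → IsZero ((T.h k).obj M)) :
    T.weight L t M = L.len ((T.h 0).obj M) := by
  unfold CohTheory.weight
  rw [tsum_eq_single 0]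
  · simp
  · intro k hk
    rw [L.len_zero _ (h (-k) (by simpa using hk)), zero_mul]

variable [HasFiniteBiproducts D] {H : Set D}

lemma detects_cohTheory (Γ : D ⥤ Db K) [Γ.CommShift ℤ] [Γ.IsTriangulated]
    (h1 : ∀ E : D, IndecIn D H E → Nonempty (Γ.obj E ≅ unitDb K))
    (h2 : ∀ E F : D, IndecIn D H E → IndecIn D H F →
        ∀ f : E ⟶ F, Γ.map f ≠ 0 → IsIso f) :
    Detects (cohTheory Γ) (dimLength K) t H := by
  have hz : ∀ M, IndecIn D H M → ∀ k, k ≠ 0 → IsZero (((cohTheory Γ).h k).obj M) := by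
    intro M hM k hk
    obtain ⟨e⟩ := h1 M hM
    exact (isZero_cohom_unit K hk).of_iso ((cohom K k).mapIso e)
  refine ⟨hz, fun M hM => ?_, fun E F hE hF f k hf => h2 E F hE hF f fun h0 => hf ?_⟩
  · rw [weight_eq_of_zero _ _ _ (hz M hM)]
    obtain ⟨e⟩ := h1 M hM
    exact ((dimLength K).len_iso ((cohom K 0).mapIso e)).trans (dimLength_cohom_unit K)
  · change (cohom K k).map (Γ.map f) = 0
    rw [h0, Functor.map_zero]

lemma detects_cohTheoryOp (Γ' : Dᵒᵖ ⥤ Db K) [Γ'.CommShift ℤ] [Γ'.IsTriangulated]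
    (h1 : ∀ E : D, IndecIn D H E → Nonempty (Γ'.obj (Opposite.op E) ≅ unitDb K))
    (h2 : ∀ E F : D, IndecIn D H E → IndecIn D H F →
        ∀ f : E ⟶ F, Γ'.map f.op ≠ 0 → IsIso f) :
    Detects (cohTheoryOp Γ') (dimLengthOp K) t H := by
  have hz : ∀ M, IndecIn D H M → ∀ k, k ≠ 0 → IsZero (((cohTheoryOp Γ').h k).obj M) := by
    intro M hM k hk
    obtain ⟨e⟩ := h1 M hM
    exact ((isZero_cohom_unit K (neg_ne_zero.2 hk)).of_iso ((cohom K (-k)).mapIso e)).op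
  refine ⟨hz, fun M hM => ?_, fun E F hE hF f k hf => h2 E F hE hF f fun h0 => hf ?_⟩
  · rw [weight_eq_of_zero _ _ _ (hz M hM)]
    obtain ⟨e⟩ := h1 M hM
    have h := ((dimLength K).len_iso ((cohom K (-0)).mapIso e))
    rw [neg_zero] at h
    exact h.trans (dimLength_cohom_unit K)
  · have h : (cohom K (-k)).map (Γ'.map f.op) = 0 := by
      rw [h0, Functor.map_zero]
    exact congrArg Quiver.Hom.op h

end Concrete
end CatEnt

/-! ### Growth rates -/

namespace CatEnt

section Growth

open Topology

lemma entSeq_mono {f g : ℕ → ℝ≥0∞} (h : ∀ n, f n ≤ g n) (n : ℕ) : entSeq f n ≤ entSeq g n :=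
  mul_le_mul_of_nonneg_left (ENNReal.log_monotone (h n))
    (EReal.coe_nonneg.2 (inv_nonneg.2 n.cast_nonneg))

lemma entSeq_const_mul (c : ℝ≥0∞) (f : ℕ → ℝ≥0∞) :
    entSeq (fun n => c * f n) = entSeq (fun _ => c) + entSeq f := by
  funext n
  change _ = entSeq (fun _ => c) n + entSeq f n
  unfold entSeq
  rw [ENNReal.log_mul_add, EReal.left_distrib_of_nonneg_of_ne_top
    (EReal.coe_nonneg.2 (inv_nonneg.2 n.cast_nonneg)) (EReal.coe_ne_top _)]

lemma tendsto_entSeq_const {c : ℝ≥0∞} (h0 : c ≠ 0) (h1 : c ≠ ⊤) :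
    Tendsto (entSeq fun _ => c) atTop (𝓝 0) := by
  have h : Tendsto (fun n : ℕ => (n : ℝ)⁻¹ * Real.log c.toReal) atTop (𝓝 0) := by
    simpa using (tendsto_natCast_atTop_atTop (R := ℝ)).inv_tendsto_atTop.mul_const
      (Real.log c.toReal)
  refine ((continuous_coe_real_ereal.tendsto 0).comp h).congr fun n => ?_
  simp only [Function.comp_apply, entSeq, ENNReal.log_pos_real h0 h1, EReal.coe_mul]

lemma limsup_entSeq_le {f g : ℕ → ℝ≥0∞} {c : ℝ≥0∞} (h0 : c ≠ 0) (h1 : c ≠ ⊤)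
    (h : ∀ n, f n ≤ c * g n) :
    limsup (entSeq f) atTop ≤ limsup (entSeq g) atTop := by
  have hc := (tendsto_entSeq_const h0 h1).limsup_eq
  calc limsup (entSeq f) atTop ≤ limsup (entSeq fun n => c * g n) atTop :=
        limsup_le_limsup (Eventually.of_forall (entSeq_mono h))
    _ = limsup (entSeq (fun _ => c) + entSeq g) atTop := by rw [entSeq_const_mul]
    _ ≤ limsup (entSeq fun _ => c) atTop + limsup (entSeq g) atTop :=
        EReal.limsup_add_le (by simp [hc]) (by simp [hc])
    _ = limsup (entSeq g) atTop := by rw [hc, zero_add]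

lemma tendsto_entSeq_const_mul {f : ℕ → ℝ≥0∞} {c : ℝ≥0∞} (h0 : c ≠ 0) (h1 : c ≠ ⊤) {l : EReal}
    (h : Tendsto (entSeq f) atTop (𝓝 l)) :
    Tendsto (entSeq fun n => c * f n) atTop (𝓝 l) := by
  rw [entSeq_const_mul]
  have : Tendsto (entSeq (fun _ => c) + entSeq f) atTop (𝓝 (0 + l)) :=
    (EReal.continuousAt_add (p := (0, l)) (by simp) (by simp)).tendsto.comp
      ((tendsto_entSeq_const h0 h1).prodMk_nhds h)
  rwa [zero_add] at this

lemma tendsto_entSeq_of_comparable {f g : ℕ → ℝ≥0∞} {c d : ℝ≥0∞} (hc0 : c ≠ 0) (hc1 : c ≠ ⊤)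
    (hd0 : d ≠ 0) (hd1 : d ≠ ⊤) (hfg : ∀ n, f n ≤ c * g n) (hgf : ∀ n, g n ≤ d * f n) {l : EReal}
    (h : Tendsto (entSeq g) atTop (𝓝 l)) : Tendsto (entSeq f) atTop (𝓝 l) := by
  refine tendsto_of_tendsto_of_tendsto_of_le_of_le
    (tendsto_entSeq_const_mul (ENNReal.inv_ne_zero.2 hd1) (ENNReal.inv_ne_top.2 hd0) h)
    (tendsto_entSeq_const_mul hc0 hc1 h) (entSeq_mono fun n => ?_) (entSeq_mono hfg)
  rw [mul_comm, ← div_eq_mul_inv]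
  exact ENNReal.div_le_of_le_mul' (hgf n)

/-- Fekete's lemma, including the case of growth rate `-∞`. -/
lemma exists_tendsto_entSeq {b : ℕ → ℝ≥0∞} (hfin : ∀ n, b n ≠ ⊤)
    (hmul : ∀ m n, b (m + n) ≤ b m * b n) : ∃ l, Tendsto (entSeq b) atTop (𝓝 l) := by
  by_cases h0 : ∃ n, b n = 0
  · obtain ⟨n, hn⟩ := h0
    refine ⟨⊥, tendsto_const_nhds.congr' ?_⟩
    filter_upwards [eventually_ge_atTop n, eventually_gt_atTop 0] with m hm hm0
    obtain ⟨k, rfl⟩ := Nat.exists_eq_add_of_le hm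
    have hb : b (n + k) = 0 := by simpa [hn] using hmul n k
    unfold entSeq
    rw [hb, ENNReal.log_zero, EReal.coe_mul_bot_of_pos (by positivity)]
  push Not at h0
  let u : ℕ → ℝ := fun n => Real.log (b n).toReal
  have hu : Subadditive u := fun m n => by
    have hm := ENNReal.toReal_pos (h0 m) (hfin m)
    have hn := ENNReal.toReal_pos (h0 n) (hfin n)
    change Real.log _ ≤ Real.log _ + Real.log _
    rw [← Real.log_mul hm.ne' hn.ne', ← ENNReal.toReal_mul]
    exact Real.log_le_log (ENNReal.toReal_pos (h0 _) (hfin _))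
      (ENNReal.toReal_mono (ENNReal.mul_ne_top (hfin m) (hfin n)) (hmul m n))
  have hent : ∀ n, entSeq b n = ((u n / n : ℝ) : EReal) := fun n => by
    unfold entSeq
    rw [ENNReal.log_pos_real (h0 n) (hfin n), div_eq_inv_mul, EReal.coe_mul]
  refine ⟨⨅ n : {n : ℕ // n ≠ 0}, ((u n / n : ℝ) : EReal),
    tendsto_of_le_liminf_of_limsup_le ?_ ?_⟩
  · refine le_liminf_of_le (by isBoundedDefault) ?_
    filter_upwards [eventually_ne_atTop 0] with n hn
    rw [hent]
    exact iInf_le (fun n : {n : ℕ // n ≠ 0} => ((u n / n : ℝ) : EReal)) ⟨n, hn⟩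
  · refine le_iInf fun n => EReal.le_of_forall_lt_iff_le.1 fun z hz => ?_
    refine limsup_le_of_le (by isBoundedDefault) ?_
    filter_upwards [hu.eventually_div_lt_of_div_lt n.2 (EReal.coe_lt_coe_iff.1 hz)] with p hp
    rw [hent]
    exact EReal.coe_le_coe_iff.2 hp.le

end Growth

section Main

set_option linter.unusedSectionVars false

variable {D : Type u} [Category.{v} D] [Preadditive D]
    [HasZeroObject D] [HasShift D ℤ] [∀ n : ℤ, (shiftFunctor D n).Additive]
    [Pretriangulated D] {A : Type*} [Category A] [Abelian A]

/-- The cohomology theory `X ↦ h^k(Φ X)`. -/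
def CohTheory.comp (T : CohTheory D A) (Φ : D ⥤ D) [Φ.CommShift ℤ] [Φ.IsTriangulated] :
    CohTheory D A where
  h k := Φ ⋙ T.h k
  homological k := inferInstance
  shiftIso k n := by
    obtain ⟨e⟩ := T.shiftIso k n
    exact ⟨(Functor.associator _ _ _).symm ≪≫
      Functor.isoWhiskerRight (Φ.commShiftIso n) (T.h k) ≪≫ Functor.associator _ _ _ ≪≫
      Functor.isoWhiskerLeft Φ e⟩

/-- The cohomology theory `X ↦ h^k(Φ^n X)`. -/
def CohTheory.iter (T : CohTheory D A) (Φ : D ⥤ D) [Φ.CommShift ℤ] [Φ.IsTriangulated] :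
    ℕ → CohTheory D A
  | 0 => T
  | n + 1 => CohTheory.iter (T.comp Φ) Φ n

lemma CohTheory.weight_iter (T : CohTheory D A) (L : LengthFn A) (t : ℝ) (Φ : D ⥤ D)
    [Φ.CommShift ℤ] [Φ.IsTriangulated] (n : ℕ) (X : D) :
    (T.iter Φ n).weight L t X = T.weight L t ((CatEnt.iter Φ n).obj X) := by
  induction n generalizing T with
  | zero => rfl
  | succ n ih => exact ih (T.comp Φ)

lemma iter_add_obj (Φ : D ⥤ D) (m n : ℕ) (X : D) :
    (iter Φ (m + n)).obj X = (iter Φ n).obj ((iter Φ m).obj X) := by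
  induction n with
  | zero => rfl
  | succ n ih => exact congrArg Φ.obj ih

variable [HasFiniteBiproducts D] {ge le : Set D} (T : CohTheory D A) (L : LengthFn A) (t : ℝ)
  (hfinite : ∀ X, T.weight L t X < ⊤) (Φ : D ⥤ D)

include hfinite in
/-- The growth rate of the weights is at most the entropy-type invariant. -/
lemma limsup_weight_le_coEntropy (hfin : FiniteCoheart D (coheart D ge le)) (E : D) :
    limsup (entSeq fun N => T.weight L t ((iter Φ N).obj E)) atTop ≤
      coEntropyIn D Set.univ (coheart D ge le) Φ t := by
  obtain ⟨-, -, r, M, -, -, hM⟩ := hfin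
  refine le_trans ?_ (le_iSup (fun E : {X : D // X ∈ Set.univ} => limsup (entSeq fun N =>
    coComplexity D (coheart D ge le) t ((iter Φ N).obj E.1)) atTop) ⟨E, Set.mem_univ _⟩)
  -- The summand `1` keeps the constant nonzero, so that `⊤ * c = ⊤` for an empty infimum.
  have hc0 : ∑ i, T.weight L t (M i) + 1 ≠ 0 := by simp
  have hc1 : ∑ i, T.weight L t (M i) + 1 ≠ ⊤ :=
    ENNReal.add_ne_top.2 ⟨(ENNReal.sum_lt_top.2 fun i _ => hfinite _).ne, ENNReal.one_ne_top⟩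
  refine limsup_entSeq_le hc0 hc1 fun N => ?_
  rw [mul_comm, ← ENNReal.div_le_iff hc0 hc1]
  refine le_sInf fun c hc => ?_
  rw [ENNReal.div_le_iff hc0 hc1]
  refine (weight_le_coComplexity_mul T L M hM hc).trans ?_
  gcongr
  exact le_self_add

include hfinite in
/-- If the cohomology theory detects the indecomposables of the co-heart, then the entropy-type
invariant is the growth rate of the weights of the images of any split-generator. -/
lemma tendsto_weight_coEntropy [Φ.CommShift ℤ] [Φ.IsTriangulated]
    (hco : IsCoTStructureIn D Set.univ ge le) (hbd : IsBoundedIn D Set.univ ge le)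
    (hfin : FiniteCoheart D (coheart D ge le)) (hdet : Detects T L t (coheart D ge le))
    {G : D} (hG : IsSplitGenerator D G) :
    ∃ l : EReal, Tendsto (entSeq fun N => T.weight L t ((iter Φ N).obj G)) atTop (nhds l) ∧
      coEntropyIn D Set.univ (coheart D ge le) Φ t = l := by
  have hle := limsup_weight_le_coEntropy T L t hfinite Φ hfin G
  obtain ⟨hdec, -, r, M, -, -, hM⟩ := hfin
  -- `b N` is the total weight of the images under `Φ^N` of the indecomposables.
  let b : ℕ → ℝ≥0∞ := fun N => ∑ i, T.weight L t ((iter Φ N).obj (M i))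
  have hb : ∀ N, b N ≠ ⊤ := fun N => (ENNReal.sum_lt_top.2 fun i _ => hfinite _).ne
  have key := fun X => exists_coFiltration_le_weight hco hbd hdec T hdet.zero hdet.rad L t
    hdet.weight X
  have hup : ∀ X N, T.weight L t ((iter Φ N).obj X) ≤ T.weight L t X * b N := by
    intro X N
    obtain ⟨a, c, ⟨m, k, Y, s, hk, -, hY, hs, hF, hc⟩, hcw⟩ := key X
    have h := weight_le_coComplexity_mul (T.iter Φ N) L M hM ⟨m, k, Y, s, hk, hY, hs, hF, hc⟩
    simp only [CohTheory.weight_iter] at h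
    exact h.trans (mul_le_mul_left hcw _)
  have hsub : ∀ m n, b (m + n) ≤ b m * b n := by
    intro m n
    change ∑ i, _ ≤ (∑ i, _) * _
    rw [Finset.sum_mul]
    refine Finset.sum_le_sum fun i _ => ?_
    rw [iter_add_obj]
    exact hup _ _
  have hup' : ∀ X N, T.weight L t ((iter Φ N).obj X) ≤ (T.weight L t X + 1) * b N := fun X N =>
    (hup X N).trans (mul_le_mul_left le_self_add _)
  have hc1 : ∀ X, T.weight L t X + 1 ≠ ⊤ := fun X =>
    ENNReal.add_ne_top.2 ⟨(hfinite X).ne, ENNReal.one_ne_top⟩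
  have hlow : ∃ d : ℝ≥0∞, d ≠ 0 ∧ d ≠ ⊤ ∧ ∀ N, b N ≤ d * T.weight L t ((iter Φ N).obj G) := by
    choose m k F' hF' hF using fun i => hG.2 (M i) (Set.mem_univ _)
    refine ⟨∑ i, ∑ j, ENNReal.ofReal (Real.exp ((k i j : ℝ) * t)) + 1, by simp,
      ENNReal.add_ne_top.2 ⟨(ENNReal.sum_lt_top.2 fun i _ => ENNReal.sum_lt_top.2 fun j _ =>
        ENNReal.ofReal_lt_top).ne, ENNReal.one_ne_top⟩, fun N => ?_⟩
    refine le_trans ?_ (mul_le_mul_left le_self_add _)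
    rw [Finset.sum_mul]
    refine Finset.sum_le_sum fun i _ => ?_
    rw [Finset.sum_mul]
    have h := ((T.iter Φ N).weight_retract L t (M i) (F' i)).trans
      ((T.iter Φ N).weight_filtration L t (hF i))
    simp only [CohTheory.weight_shift] at h
    simpa only [CohTheory.weight_iter] using h
  obtain ⟨l, hl⟩ := exists_tendsto_entSeq hb hsub
  obtain ⟨d, hd0, hd1, hd⟩ := hlow
  have hlG := tendsto_entSeq_of_comparable (by simp) (hc1 G) hd0 hd1 (hup' G) hd hl
  refine ⟨l, hlG, le_antisymm (iSup_le fun E => ?_) (hlG.limsup_eq ▸ hle)⟩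
  rw [← hl.limsup_eq]
  refine limsup_entSeq_le (c := T.weight L t E.1 + 1) (by simp) (hc1 E.1) fun N => ?_
  obtain ⟨a, c, hc, hcw⟩ := key ((iter Φ N).obj E.1)
  exact (hc.coComplexity_le.trans hcw).trans (hup' E.1 N)

end Main
end CatEnt

/-- let `𝔟 = (ge, le)` be a bounded co-t-structure with finite
co-heart `H` on a `K`-linear idempotent complete triangulated category `D` with
split-generator, `Φ` an exact endofunctor with `Φ^N ≇ 0`, and `Γ : D ⥤ D^b(K)`
(resp. `Γ' : Dᵒᵖ ⥤ D^b(K)`) an exact functor. Then (i) `ȟ_t^𝔟(Φ)` dominates the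
limsup of `(1/N) log ∑_k dim H^{-k}(Γ(Φ^N E)) e^{kt}` for every `E`; and (ii) if
`Γ(E) ≅ K` for every indecomposable `E ∈ H` and every morphism `f` between
indecomposables of `H` with `Γ(f) ≠ 0` is an isomorphism, then for every
split-generator `G` the limit exists and equals `ȟ_t^𝔟(Φ)`. The analogous
statements hold for `Γ'` with `e^{kt}` replaced by `e^{-kt}`. -/
theorem coEntropy_dim_growth
    (K : Type) [Field K]
    (D : Type u) [Category.{v} D] [Preadditive D] [CategoryTheory.Linear K D]
    [HasZeroObject D] [HasShift D ℤ] [∀ n : ℤ, (shiftFunctor D n).Additive]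
    [Pretriangulated D] [HasFiniteBiproducts D] [IsIdempotentComplete D]
    (ge le : Set D)
    (hco : IsCoTStructureIn D Set.univ ge le)
    (hbd : IsBoundedIn D Set.univ ge le)
    (hfin : FiniteCoheart D (coheart D ge le))
    (Φ : D ⥤ D) [Φ.CommShift ℤ] [Φ.IsTriangulated]
    (hΦ : PowersNonzeroOn D Set.univ Φ)
    (hgen : ∃ G, IsSplitGenerator D G)
    (Γ : D ⥤ Db K) [Γ.CommShift ℤ] [Γ.IsTriangulated]
    (hΓb : ∀ X : D, MemDb K (Γ.obj X))
    (Γ' : Dᵒᵖ ⥤ Db K) [Γ'.CommShift ℤ] [Γ'.IsTriangulated]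
    (hΓ'b : ∀ X : Dᵒᵖ, MemDb K (Γ'.obj X))
    (t : ℝ) :
    (∀ E : D,
      Filter.limsup
        (entSeq (fun N => dimSumNeg K (Γ.obj ((iter Φ N).obj E)) t))
        Filter.atTop ≤ coEntropyIn D Set.univ (coheart D ge le) Φ t) ∧
    ((∀ E : D, IndecIn D (coheart D ge le) E → Nonempty (Γ.obj E ≅ unitDb K)) →
      (∀ E F : D, IndecIn D (coheart D ge le) E → IndecIn D (coheart D ge le) F →
        ∀ f : E ⟶ F, Γ.map f ≠ 0 → IsIso f) →
      ∀ G : D, IsSplitGenerator D G →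
        ∃ L : EReal,
          Filter.Tendsto
            (entSeq (fun N => dimSumNeg K (Γ.obj ((iter Φ N).obj G)) t))
            Filter.atTop (nhds L) ∧
          coEntropyIn D Set.univ (coheart D ge le) Φ t = L) ∧
    (∀ E : D,
      Filter.limsup
        (entSeq (fun N => dimSumNeg K (Γ'.obj (Opposite.op ((iter Φ N).obj E))) (-t)))
        Filter.atTop ≤ coEntropyIn D Set.univ (coheart D ge le) Φ t) ∧
    ((∀ E : D, IndecIn D (coheart D ge le) E →
        Nonempty (Γ'.obj (Opposite.op E) ≅ unitDb K)) →
      (∀ E F : D, IndecIn D (coheart D ge le) E → IndecIn D (coheart D ge le) F →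
        ∀ f : E ⟶ F, Γ'.map f.op ≠ 0 → IsIso f) →
      ∀ G : D, IsSplitGenerator D G →
        ∃ L : EReal,
          Filter.Tendsto
            (entSeq (fun N => dimSumNeg K (Γ'.obj (Opposite.op ((iter Φ N).obj G))) (-t)))
            Filter.atTop (nhds L) ∧
          coEntropyIn D Set.univ (coheart D ge le) Φ t = L) := by
  have hfinΓ : ∀ X, (cohTheory Γ).weight (dimLength K) t X < ⊤ := fun X =>
    (weight_cohTheory t Γ (hΓb X)).trans_lt (dimSumNeg_lt_top K (hΓb X) t)
  have hfinΓ' : ∀ X, (cohTheoryOp Γ').weight (dimLengthOp K) t X < ⊤ := fun X =>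
    (weight_cohTheoryOp t Γ' (hΓ'b _)).trans_lt (dimSumNeg_lt_top K (hΓ'b _) (-t))
  have hw : ∀ X, dimSumNeg K (Γ.obj X) t = (cohTheory Γ).weight (dimLength K) t X := fun X =>
    (weight_cohTheory t Γ (hΓb X)).symm
  have hw' : ∀ X, dimSumNeg K (Γ'.obj (Opposite.op X)) (-t) =
      (cohTheoryOp Γ').weight (dimLengthOp K) t X := fun X =>
    (weight_cohTheoryOp t Γ' (hΓ'b _)).symm
  simp only [hw, hw']
  exact ⟨limsup_weight_le_coEntropy _ _ t hfinΓ Φ hfin,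
    fun h1 h2 G hG => tendsto_weight_coEntropy _ _ t hfinΓ Φ hco hbd hfin
      (detects_cohTheory t Γ h1 h2) hG,
    limsup_weight_le_coEntropy _ _ t hfinΓ' Φ hfin,
    fun h1 h2 G hG => tendsto_weight_coEntropy _ _ t hfinΓ' Φ hco hbd hfin
      (detects_cohTheoryOp t Γ' h1 h2) hG⟩
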